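/- arXiv:2605.04438 — 3 statements merged into one kernel-verified Lean document; each statement's English description precedes it below -/
import Mathlib

section
/- For n even, n ≥ 4, if G is an n-vertex graph that is not matching covered, then ρ(G) ≤ ρ(H_{n,3}), with equality if and only if G ≅ H_{n,3}. -/
open SimpleGraph Finset
open scoped Classical

lemma adjMatrix_isHermitian {V : Type*} [Fintype V] (G : SimpleGraph V)
    [DecidableRel G.Adj] : (G.adjMatrix ℝ).IsHermitian := by
  ext i j
  simp [Matrix.conjTranspose_apply, SimpleGraph.adjMatrix_apply, SimpleGraph.adj_comm]

/-- The spectral radius of a graph: the largest eigenvalue of its adjacency matrix. -/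
noncomputable def specRad {n : ℕ} (G : SimpleGraph (Fin n)) : ℝ := by
  classical
  exact ⨆ i, (adjMatrix_isHermitian G).eigenvalues i

/-- H_{n,γ}: vertex 0 is joined to the γ-1 vertices 1,…,γ-1; vertices 1,…,n-1 form a
clique.  Thus Hgraph n γ = K_{γ-1} ∨ (K_{n-γ} ∪ K_1). -/
def Hgraph (n γ : ℕ) : SimpleGraph (Fin n) :=
  SimpleGraph.fromRel (fun u v =>
    (0 < u.val ∧ 0 < v.val) ∨ (u.val = 0 ∧ 0 < v.val ∧ v.val < γ))

/-- G is matching covered: every edge lies in some perfect matching. -/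
def IsMatchingCovered {V : Type*} (G : SimpleGraph V) : Prop :=
  ∀ e ∈ G.edgeSet, ∃ M : G.Subgraph, M.IsPerfectMatching ∧ e ∈ M.edgeSet

/-!
If some vertex of `G` has degree at most two, then `G` embeds in `H_{n,3}` as a spanning subgraph,
and the spectral radius is monotone, strictly so below a connected graph: a Perron vector of the
smaller graph is a test vector for the Rayleigh quotient of the larger one.

Otherwise all degrees are at least three. Some edge `uv` lies in no perfect matching, so Tutte's
theorem and parity, applied to `G - u - v`, give a set `S ∋ u, v` whose deletion leaves at least
`#S` components. Every vertex outside `S` then has few neighbours outside `S`, so that a positive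
vector `y` constant on `S` and on its complement satisfies `A y ≤ (n - 2) y`. By Collatz and
Wielandt `ρ(G) ≤ n - 2`, while `H_{n,3}` contains the clique `K_{n-1}` and has `ρ(H_{n,3}) > n - 2`.
For `n = 6` and `#S = 3` the bound `n - 2` fails, and both spectral radii are estimated numerically.
-/

section Perron

open Matrix

variable {ι : Type*} [Fintype ι] {A B : Matrix ι ι ℝ} {r s : ℝ}

lemma dotProduct_mulVec_le_abs (hA : ∀ i j, 0 ≤ A i j) (x : ι → ℝ) :
    x ⬝ᵥ (A *ᵥ x) ≤ |x| ⬝ᵥ (A *ᵥ |x|) := by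
  simp only [dotProduct, mulVec, mul_sum]
  refine sum_le_sum fun i _ => sum_le_sum fun j _ => ?_
  calc x i * (A i j * x j) ≤ |x i * (A i j * x j)| := le_abs_self _
    _ = |x| i * (A i j * |x| j) := by
      rw [abs_mul, abs_mul, abs_of_nonneg (hA i j), Pi.abs_apply, Pi.abs_apply]

lemma dotProduct_mulVec_le_of_apply_le (hAB : ∀ i j, A i j ≤ B i j) {z : ι → ℝ} (hz : 0 ≤ z) :
    z ⬝ᵥ (A *ᵥ z) ≤ z ⬝ᵥ (B *ᵥ z) :=
  dotProduct_le_dotProduct_of_nonneg_left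
    (fun i => dotProduct_le_dotProduct_of_nonneg_right (hAB i) hz) hz

lemma dotProduct_smul_one_sub_mulVec [DecidableEq ι] (x : ι → ℝ) :
    star x ⬝ᵥ ((r • (1 : Matrix ι ι ℝ) - A) *ᵥ x) = r * (x ⬝ᵥ x) - x ⬝ᵥ (A *ᵥ x) := by
  simp only [star_trivial, sub_mulVec, smul_mulVec, one_mulVec, dotProduct_sub, dotProduct_smul,
    smul_eq_mul]

variable [DecidableEq ι]

lemma posSemidef_smul_one_sub_of_mem_upperBounds (hA : A.IsHermitian)
    (hr : r ∈ upperBounds (spectrum ℝ A)) : (r • (1 : Matrix ι ι ℝ) - A).PosSemidef := by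
  rw [← Algebra.algebraMap_eq_smul_one, posSemidef_iff_isHermitian_and_spectrum_nonneg,
    ← spectrum.singleton_sub_eq]
  refine ⟨(isHermitian_diagonal _).sub hA, ?_⟩
  rintro _ ⟨_, rfl, μ, hμ, rfl⟩
  exact sub_nonneg.2 (hr hμ)

lemma dotProduct_mulVec_le_of_mem_upperBounds (hA : A.IsHermitian)
    (hr : r ∈ upperBounds (spectrum ℝ A)) (x : ι → ℝ) : x ⬝ᵥ (A *ᵥ x) ≤ r * (x ⬝ᵥ x) := by
  have h := (posSemidef_smul_one_sub_of_mem_upperBounds hA hr).dotProduct_mulVec_nonneg x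
  rwa [dotProduct_smul_one_sub_mulVec, sub_nonneg] at h

lemma mulVec_eq_smul_of_le_dotProduct_mulVec (hA : A.IsHermitian)
    (hr : r ∈ upperBounds (spectrum ℝ A)) {x : ι → ℝ} (hx : r * (x ⬝ᵥ x) ≤ x ⬝ᵥ (A *ᵥ x)) :
    A *ᵥ x = r • x := by
  have h := ((posSemidef_smul_one_sub_of_mem_upperBounds hA hr).dotProduct_mulVec_zero_iff x).1 (by
    rw [dotProduct_smul_one_sub_mulVec, sub_eq_zero]
    exact hx.antisymm (dotProduct_mulVec_le_of_mem_upperBounds hA hr x))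
  rwa [sub_mulVec, smul_mulVec, one_mulVec, sub_eq_zero, eq_comm] at h

lemma exists_nonneg_mulVec_eq_smul (hA : A.IsHermitian) (hA0 : ∀ i j, 0 ≤ A i j)
    (hr : IsGreatest (spectrum ℝ A) r) : ∃ z : ι → ℝ, 0 ≤ z ∧ z ≠ 0 ∧ A *ᵥ z = r • z := by
  obtain ⟨x, hx⟩ := (Module.End.HasEigenvalue.of_mem_spectrum
    ((spectrum_toLin' A).symm ▸ hr.1)).exists_hasEigenvector
  have hAx : A *ᵥ x = r • x := hx.apply_eq_smul
  refine ⟨|x|, abs_nonneg x, fun h => hx.2 (funext fun i => abs_eq_zero.1 (congrFun h i)),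
    mulVec_eq_smul_of_le_dotProduct_mulVec hA hr.2 ?_⟩
  calc r * (|x| ⬝ᵥ |x|) = x ⬝ᵥ (A *ᵥ x) := by
        rw [hAx, dotProduct_smul, smul_eq_mul]
        simp only [dotProduct, Pi.abs_apply, abs_mul_abs_self]
    _ ≤ |x| ⬝ᵥ (A *ᵥ |x|) := dotProduct_mulVec_le_abs hA0 x

lemma le_of_isGreatest_spectrum_of_mulVec_le_smul (hA : A.IsHermitian) (hA0 : ∀ i j, 0 ≤ A i j)
    (hr : IsGreatest (spectrum ℝ A) r) {y : ι → ℝ} (hy : ∀ i, 0 < y i) (h : A *ᵥ y ≤ s • y) :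
    r ≤ s := by
  obtain ⟨z, hz, hz0, hAz⟩ := exists_nonneg_mulVec_eq_smul hA hA0 hr
  obtain ⟨i, hi⟩ := Function.ne_iff.1 hz0
  have hpos : 0 < z ⬝ᵥ y := sum_pos' (fun j _ => mul_nonneg (hz j) (hy j).le)
    ⟨i, mem_univ i, mul_pos ((hz i).lt_of_ne' hi) (hy i)⟩
  refine le_of_mul_le_mul_right ?_ hpos
  calc r * (z ⬝ᵥ y) = (A *ᵥ z) ⬝ᵥ y := by rw [hAz, smul_dotProduct, smul_eq_mul]
    _ = z ⬝ᵥ (A *ᵥ y) := by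
      rw [dotProduct_mulVec, ← mulVec_transpose, ← conjTranspose_eq_transpose_of_trivial, hA.eq]
    _ ≤ z ⬝ᵥ (s • y) := dotProduct_le_dotProduct_of_nonneg_left h hz
    _ = s * (z ⬝ᵥ y) := by rw [dotProduct_smul, smul_eq_mul]

lemma le_of_isGreatest_spectrum_of_apply_le (hA : A.IsHermitian) (hA0 : ∀ i j, 0 ≤ A i j)
    (hB : B.IsHermitian) (hAB : ∀ i j, A i j ≤ B i j) (hr : IsGreatest (spectrum ℝ A) r)
    (hs : s ∈ upperBounds (spectrum ℝ B)) : r ≤ s := by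
  obtain ⟨z, hz, hz0, hAz⟩ := exists_nonneg_mulVec_eq_smul hA hA0 hr
  have hpos : 0 < z ⬝ᵥ z := by simpa using dotProduct_star_self_pos_iff.2 hz0
  refine le_of_mul_le_mul_right ?_ hpos
  calc r * (z ⬝ᵥ z) = z ⬝ᵥ (A *ᵥ z) := by rw [hAz, dotProduct_smul, smul_eq_mul]
    _ ≤ z ⬝ᵥ (B *ᵥ z) := dotProduct_mulVec_le_of_apply_le hAB hz
    _ ≤ s * (z ⬝ᵥ z) := dotProduct_mulVec_le_of_mem_upperBounds hB hs z

lemma mulVec_eq_smul_of_apply_le (hB : B.IsHermitian) (hAB : ∀ i j, A i j ≤ B i j)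
    (hr : r ∈ upperBounds (spectrum ℝ B)) {z : ι → ℝ} (hz : 0 ≤ z) (hAz : A *ᵥ z = r • z) :
    B *ᵥ z = r • z := by
  refine mulVec_eq_smul_of_le_dotProduct_mulVec hB hr ?_
  calc r * (z ⬝ᵥ z) = z ⬝ᵥ (A *ᵥ z) := by rw [hAz, dotProduct_smul, smul_eq_mul]
    _ ≤ z ⬝ᵥ (B *ᵥ z) := dotProduct_mulVec_le_of_apply_le hAB hz

end Perron

section AdjMatrix

open Matrix

variable {V : Type*} {G H : SimpleGraph V} [DecidableRel G.Adj] [DecidableRel H.Adj]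

lemma adjMatrix_apply_nonneg (v w : V) : 0 ≤ G.adjMatrix ℝ v w := by
  rw [adjMatrix_apply]
  split_ifs <;> norm_num

lemma adjMatrix_apply_mono (h : G ≤ H) (v w : V) : G.adjMatrix ℝ v w ≤ H.adjMatrix ℝ v w := by
  simp only [adjMatrix_apply]
  split_ifs with hG hH
  exacts [le_rfl, absurd (h hG) hH, zero_le_one, le_rfl]

variable [Fintype V]

lemma adjMatrix_mulVec_ite_mem_apply [DecidableEq V] (S : Finset V) (a b : ℝ) (v : V) :
    (G.adjMatrix ℝ *ᵥ fun w => if w ∈ S then a else b) v =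
      #(G.neighborFinset v ∩ S) * a + #(G.neighborFinset v \ S) * b := by
  rw [adjMatrix_mulVec_apply, sum_ite, filter_mem_eq_inter, filter_notMem_eq_sdiff, sum_const,
    sum_const, nsmul_eq_mul, nsmul_eq_mul]

lemma pos_of_adjMatrix_mulVec_eq_smul (hG : G.Connected) {z : V → ℝ} {r : ℝ} (hz : 0 ≤ z)
    (hz0 : z ≠ 0) (h : G.adjMatrix ℝ *ᵥ z = r • z) (v : V) : 0 < z v := by
  refine (hz v).lt_of_ne' fun hv => hz0 (funext fun w => ?_)
  have hadj : ∀ a b, G.Adj a b → z a = 0 → z b = 0 := fun a b hab ha => by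
    have hsum : ∑ c ∈ G.neighborFinset a, z c = 0 := by
      rw [← adjMatrix_mulVec_apply, h, Pi.smul_apply, ha, smul_zero]
    exact (sum_eq_zero_iff_of_nonneg fun c _ => hz c).1 hsum b ((G.mem_neighborFinset a b).2 hab)
  obtain ⟨p⟩ := hG.preconnected v w
  induction p with
  | nil => exact hv
  | cons hab _ ih => exact ih (hadj _ _ hab hv)

lemma eq_of_le_of_adjMatrix_mulVec_eq (h : G ≤ H) {z : V → ℝ} (hz : ∀ v, 0 < z v)
    (heq : G.adjMatrix ℝ *ᵥ z = H.adjMatrix ℝ *ᵥ z) : G = H := by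
  refine le_antisymm h fun v w hvw => by_contra fun hG => ?_
  refine (sum_lt_sum_of_subset (f := z) (fun a => ?_) ((H.mem_neighborFinset v w).2 hvw)
    (fun hw => hG ((G.mem_neighborFinset v w).1 hw)) (hz w) fun a _ _ => (hz a).le).ne ?_
  · simpa only [mem_neighborFinset] using @h v a
  · rw [← adjMatrix_mulVec_apply, ← adjMatrix_mulVec_apply, heq]

end AdjMatrix

section SpecRad

open Matrix

variable {n : ℕ} {G H : SimpleGraph (Fin n)}

lemma specRad_eq_sSup_spectrum (G : SimpleGraph (Fin n)) :
    specRad G = sSup (spectrum ℝ (G.adjMatrix ℝ)) := by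
  rw [(adjMatrix_isHermitian G).spectrum_real_eq_range_eigenvalues, sSup_range, specRad]

lemma specRad_eq_of_iso (f : G ≃g H) : specRad G = specRad H := by
  rw [specRad_eq_sSup_spectrum, specRad_eq_sSup_spectrum, ← f.reindex_adjMatrix ℝ,
    ← Matrix.coe_reindexAlgEquiv ℝ ℝ, AlgEquiv.spectrum_eq]

variable [NeZero n]

lemma isGreatest_spectrum_specRad (G : SimpleGraph (Fin n)) :
    IsGreatest (spectrum ℝ (G.adjMatrix ℝ)) (specRad G) := by
  have hfin := (G.adjMatrix ℝ).finite_real_spectrum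
  have hne : (spectrum ℝ (G.adjMatrix ℝ)).Nonempty :=
    ⟨_, (adjMatrix_isHermitian G).eigenvalues_mem_spectrum_real 0⟩
  rw [specRad_eq_sSup_spectrum]
  exact ⟨hne.csSup_mem hfin, fun μ hμ => le_csSup hfin.bddAbove hμ⟩

lemma dotProduct_adjMatrix_mulVec_le (G : SimpleGraph (Fin n)) (x : Fin n → ℝ) :
    x ⬝ᵥ (G.adjMatrix ℝ *ᵥ x) ≤ specRad G * (x ⬝ᵥ x) :=
  dotProduct_mulVec_le_of_mem_upperBounds (adjMatrix_isHermitian G)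
    (isGreatest_spectrum_specRad G).2 x

lemma specRad_le_of_adjMatrix_mulVec_le {y : Fin n → ℝ} {c : ℝ} (hy : ∀ v, 0 < y v)
    (h : G.adjMatrix ℝ *ᵥ y ≤ c • y) : specRad G ≤ c :=
  le_of_isGreatest_spectrum_of_mulVec_le_smul (adjMatrix_isHermitian G) adjMatrix_apply_nonneg
    (isGreatest_spectrum_specRad G) hy h

lemma specRad_mono (h : G ≤ H) : specRad G ≤ specRad H :=
  le_of_isGreatest_spectrum_of_apply_le (adjMatrix_isHermitian G) adjMatrix_apply_nonneg
    (adjMatrix_isHermitian H) (adjMatrix_apply_mono h)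
    (isGreatest_spectrum_specRad G) (isGreatest_spectrum_specRad H).2

lemma eq_of_le_of_specRad_eq (h : G ≤ H) (hH : H.Connected) (heq : specRad G = specRad H) :
    G = H := by
  obtain ⟨z, hz, hz0, hGz⟩ := exists_nonneg_mulVec_eq_smul (adjMatrix_isHermitian G)
    adjMatrix_apply_nonneg (isGreatest_spectrum_specRad G)
  have hHz : H.adjMatrix ℝ *ᵥ z = specRad G • z :=
    mulVec_eq_smul_of_apply_le (adjMatrix_isHermitian H) (adjMatrix_apply_mono h)
      (heq ▸ (isGreatest_spectrum_specRad H).2) hz hGz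
  exact eq_of_le_of_adjMatrix_mulVec_eq h (pos_of_adjMatrix_mulVec_eq_smul hH hz hz0 hHz)
    (hGz.trans hHz.symm)

end SpecRad

section Hgraph

open Matrix

variable {m n k γ : ℕ}

lemma Hgraph_adj_succ_succ {i j : Fin m} : (Hgraph (m + 1) γ).Adj i.succ j.succ ↔ i ≠ j := by
  simp [Hgraph]

lemma Hgraph_adj_zero_succ {j : Fin m} : (Hgraph (m + 1) (k + 1)).Adj 0 j.succ ↔ (j : ℕ) < k := by
  simp [Hgraph, (Fin.succ_ne_zero j).symm]

lemma Hgraph_connected (hγ : 2 ≤ γ) (hn : 2 ≤ n) : (Hgraph n γ).Connected := by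
  refine (connected_iff_exists_forall_reachable _).2 ⟨⟨1, hn⟩, fun v => ?_⟩
  rcases eq_or_ne v ⟨1, hn⟩ with rfl | hv
  · exact Reachable.refl _
  · refine Adj.reachable ?_
    simp only [Hgraph, fromRel_adj, ne_eq, Fin.ext_iff] at hv ⊢
    omega

lemma le_specRad_Hgraph (hk : k ≤ m) (ε : ℝ) :
    m * (m - 1) + 2 * k * ε ≤ specRad (Hgraph (m + 1) (k + 1)) * (ε ^ 2 + m) := by
  let H := Hgraph (m + 1) (k + 1)
  let x : Fin (m + 1) → ℝ := Fin.cons ε fun _ => 1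
  have hx : x ⬝ᵥ x = ε ^ 2 + m := by
    simp [x, dotProduct, Fin.sum_univ_succ, sq]
  have hzero : (H.adjMatrix ℝ *ᵥ x) 0 = k := by
    simp [x, H, mulVec, dotProduct, Fin.sum_univ_succ, adjMatrix_apply, Hgraph_adj_zero_succ,
      Fin.card_filter_val_lt, hk]
  have hclique (i : Fin m) : ∑ j : Fin m, H.adjMatrix ℝ i.succ j.succ = m - 1 := by
    simp only [H, adjMatrix_apply, Hgraph_adj_succ_succ, sum_boole]
    rw [Finset.filter_ne, card_erase_of_mem (mem_univ i), card_univ, Fintype.card_fin,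
      Nat.cast_pred i.pos]
  have hsucc (i : Fin m) :
      (H.adjMatrix ℝ *ᵥ x) i.succ = (if (i : ℕ) < k then ε else 0) + (m - 1) := by
    simp only [x, mulVec, dotProduct, Fin.sum_univ_succ, Fin.cons_zero, Fin.cons_succ, mul_one]
    rw [hclique, adjMatrix_apply, adj_comm]
    simp [H, Hgraph_adj_zero_succ]
  calc m * (m - 1) + 2 * k * ε = x ⬝ᵥ (H.adjMatrix ℝ *ᵥ x) := by
        simp only [x, dotProduct, Fin.sum_univ_succ, hzero, hsucc, Fin.cons_zero, Fin.cons_succ,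
          one_mul, sum_add_distrib, ← sum_filter, sum_const, Fin.card_filter_val_lt,
          min_eq_right hk, card_univ, Fintype.card_fin, nsmul_eq_mul]
        ring
    _ ≤ specRad H * (ε ^ 2 + m) := hx ▸ dotProduct_adjMatrix_mulVec_le H x

lemma sub_two_lt_specRad_Hgraph (hγ : 2 ≤ γ) (hn : γ ≤ n) : (n - 2 : ℝ) < specRad (Hgraph n γ) := by
  obtain ⟨k, rfl⟩ : ∃ k, γ = k + 1 := ⟨γ - 1, by omega⟩
  obtain ⟨m, rfl⟩ : ∃ m, n = m + 1 := ⟨n - 1, by omega⟩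
  have hk : (1 : ℝ) ≤ k := by exact_mod_cast (by omega : 1 ≤ k)
  have hm : (1 : ℝ) ≤ m := by exact_mod_cast (by omega : 1 ≤ m)
  have h := le_specRad_Hgraph (by omega : k ≤ m) (1 / m : ℝ)
  refine lt_of_mul_lt_mul_right (lt_of_lt_of_le ?_ h) (by positivity)
  have h1 : (m : ℝ)⁻¹ ^ 2 * m = (m : ℝ)⁻¹ := by field_simp
  have h2 : 0 < (m : ℝ)⁻¹ := by positivity
  push_cast
  rw [one_div]
  nlinarith [mul_le_mul_of_nonneg_right hk h2.le]

lemma exists_perm_val_lt_of_degree_lt {G : SimpleGraph (Fin n)} {w : Fin n}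
    (hw : G.degree w < γ) : ∃ e : Equiv.Perm (Fin n),
      (∀ x, (e x : ℕ) = 0 → x = w) ∧ ∀ y, G.Adj w y → (e y : ℕ) < γ := by
  -- Sorting by `f` puts `w` first, then its neighbours, then all other vertices.
  let f : Fin n → ℕ := fun x => if x = w then 0 else if G.Adj w x then 1 else 2
  let e : Equiv.Perm (Fin n) := (Tuple.sort f).symm
  have hmono : Monotone (f ∘ e.symm) := Tuple.monotone_sort f
  have hcard : #{i | (f ∘ e.symm) i ≤ 1} ≤ γ := by
    calc #{i | (f ∘ e.symm) i ≤ 1} = #{x | f x ≤ 1} :=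
          card_equiv e.symm fun i => by simp
      _ ≤ #(insert w (G.neighborFinset w)) := card_le_card fun x hx => by
          simp only [f, mem_filter_univ] at hx
          simp only [mem_insert, mem_neighborFinset]
          split_ifs at hx <;> simp_all
      _ ≤ γ := (card_insert_le _ _).trans hw
  refine ⟨e, fun x hx => ?_, fun y hy => ?_⟩
  · have hle : f x ≤ f w := by
      simpa using hmono (Fin.le_iff_val_le_val.2 (hx.trans_le (Nat.zero_le _)) : e x ≤ e w)
    by_contra hxw
    simp only [f, if_neg hxw, if_true] at hle
    split_ifs at hle <;> omega
  · refine lt_of_lt_of_le ((Tuple.lt_card_le_iff_apply_le_of_monotone hmono).2 ?_) hcard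
    simp [f, hy, hy.ne']

lemma exists_perm_le_comap_Hgraph {G : SimpleGraph (Fin n)} {w : Fin n} (hw : G.degree w < γ) :
    ∃ e : Equiv.Perm (Fin n), G ≤ (Hgraph n γ).comap e := by
  obtain ⟨e, hzero, hlt⟩ := exists_perm_val_lt_of_degree_lt hw
  refine ⟨e, fun x y hxy => ?_⟩
  have hne : (e x : ℕ) ≠ e y := fun h => hxy.ne (e.injective (Fin.ext h))
  have hx : (e x : ℕ) = 0 → (e y : ℕ) < γ := fun h => hlt y (hzero x h ▸ hxy)
  have hy : (e y : ℕ) = 0 → (e x : ℕ) < γ := fun h => hlt x (hzero y h ▸ hxy.symm)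
  simp only [comap_adj, Hgraph, fromRel_adj, ne_eq, Fin.ext_iff]
  omega

lemma specRad_le_Hgraph_of_degree_lt {G : SimpleGraph (Fin n)} {w : Fin n} (hw : G.degree w < γ) :
    specRad G ≤ specRad (Hgraph n γ) := by
  have : NeZero n := ⟨w.pos.ne'⟩
  obtain ⟨e, he⟩ := exists_perm_le_comap_Hgraph hw
  exact (specRad_mono he).trans_eq (specRad_eq_of_iso (Iso.comap e _))

lemma specRad_eq_Hgraph_iff_of_degree_lt (hγ : 2 ≤ γ) (hn : 2 ≤ n) {G : SimpleGraph (Fin n)}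
    {w : Fin n} (hw : G.degree w < γ) :
    specRad G = specRad (Hgraph n γ) ↔ Nonempty (G ≃g Hgraph n γ) := by
  have : NeZero n := ⟨w.pos.ne'⟩
  obtain ⟨e, he⟩ := exists_perm_le_comap_Hgraph hw
  let f : (Hgraph n γ).comap e ≃g Hgraph n γ := Iso.comap e _
  refine ⟨fun heq => ?_, fun ⟨g⟩ => specRad_eq_of_iso g⟩
  have hG := eq_of_le_of_specRad_eq he (f.connected_iff.2 (Hgraph_connected hγ hn))
    (heq.trans (specRad_eq_of_iso f).symm)
  exact ⟨hG ▸ f⟩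

end Hgraph

section Components

variable {V W : Type*}

lemma card_connectedComponent_le_of_surjective [Finite V] {G : SimpleGraph V} {H : SimpleGraph W}
    (f : G →g H) (hf : Function.Surjective f) :
    Nat.card H.ConnectedComponent ≤ Nat.card G.ConnectedComponent :=
  Nat.card_le_card_of_surjective (ConnectedComponent.map f) <|
    ConnectedComponent.ind <| hf.forall.2 fun v => ⟨G.connectedComponentMk v, rfl⟩

lemma card_connectedComponent_deleteVerts_induce_compl_le [Finite V] (G : SimpleGraph V)
    {U : Set V} (T : Set (Uᶜ : Set V)) :
    Nat.card ((⊤ : (G.induce Uᶜ).Subgraph).deleteVerts T).coe.ConnectedComponent ≤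
      Nat.card (G.induce (Subtype.val '' T ∪ U)ᶜ).ConnectedComponent := by
  let f : G.induce (Subtype.val '' T ∪ U)ᶜ →g
      ((⊤ : (G.induce Uᶜ).Subgraph).deleteVerts T).coe :=
    { toFun := fun w =>
        ⟨⟨w, fun hw => w.2 (Or.inr hw)⟩, trivial, fun hw => w.2 (Or.inl ⟨_, hw, rfl⟩)⟩
      map_rel' := fun {a b} hab => Subgraph.deleteVerts_adj.2
        ⟨trivial, fun ha => a.2 (Or.inl ⟨_, ha, rfl⟩), trivial, fun hb => b.2 (Or.inl ⟨_, hb, rfl⟩),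
          hab⟩ }
  refine card_connectedComponent_le_of_surjective f ?_
  rintro ⟨⟨w, hwU⟩, -, hwT⟩
  refine ⟨⟨w, ?_⟩, rfl⟩
  rintro (⟨a, ha, rfl⟩ | hw)
  exacts [hwT ha, hwU hw]

variable [Fintype V] {G : SimpleGraph V} [DecidableRel G.Adj]

lemma degree_add_card_connectedComponent_le (v : V) :
    G.degree v + Nat.card G.ConnectedComponent ≤ Fintype.card V := by
  have hsurj : Set.SurjOn G.connectedComponentMk ↑(G.neighborFinset v)ᶜ
      ↑(univ : Finset G.ConnectedComponent) := by
    refine fun C _ => C.ind fun w => ?_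
    by_cases hw : G.Adj v w
    · exact ⟨v, by simp, ConnectedComponent.sound hw.reachable⟩
    · exact ⟨w, by simpa using hw, rfl⟩
  have hcard := card_le_card_of_surjOn _ hsurj
  rw [card_univ, ← Nat.card_eq_fintype_card, card_compl, card_neighborFinset_eq_degree] at hcard
  have := G.degree_lt_card_verts v
  omega

lemma degree_add_degree_add_two_le_of_not_reachable {v w : V} (h : ¬ G.Reachable v w) :
    G.degree v + G.degree w + 2 ≤ Fintype.card V := by
  have hdisj : Disjoint (insert v (G.neighborFinset v)) (insert w (G.neighborFinset w)) := by
    refine disjoint_left.2 fun x hv hw => h ?_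
    simp only [mem_insert, mem_neighborFinset] at hv hw
    have hvx : G.Reachable v x := hv.elim (fun hx => hx ▸ Reachable.refl x) Adj.reachable
    exact hvx.trans (hw.elim (fun hx => hx ▸ Reachable.refl x) fun hx => hx.reachable.symm)
  calc G.degree v + G.degree w + 2
      = #(insert v (G.neighborFinset v)) + #(insert w (G.neighborFinset w)) := by
        rw [card_insert_of_notMem (G.notMem_neighborFinset_self v),
          card_insert_of_notMem (G.notMem_neighborFinset_self w), card_neighborFinset_eq_degree,
          card_neighborFinset_eq_degree]
        ring
    _ ≤ Fintype.card V := card_union_of_disjoint hdisj ▸ card_le_univ _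

lemma degree_induce_compl [DecidableEq V] (S : Finset V) (v : ((S : Set V)ᶜ : Set V)) :
    (G.induce (S : Set V)ᶜ).degree v = #(G.neighborFinset v \ S) := by
  rw [← card_neighborFinset_eq_degree, ← card_map (Function.Embedding.subtype _)]
  congr 1
  ext w
  simp [and_comm]

end Components

section WeakBarrier

variable {V : Type*} {G : SimpleGraph V}

/-- `S` is a weak barrier of `G` if `G - S` has at least `#S` components. The barriers of matching
theory count only the odd components of `G - S`; here all components count. -/
def IsWeakBarrier (G : SimpleGraph V) (S : Finset V) : Prop :=
  #S ≤ Nat.card (G.induce (S : Set V)ᶜ).ConnectedComponent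

lemma exists_ncard_add_two_le_ncard_oddComponents [Finite V] (hV : Even (Nat.card V))
    (h : ∀ M : G.Subgraph, ¬ M.IsPerfectMatching) :
    ∃ T : Set V, T.ncard + 2 ≤ ((⊤ : G.Subgraph).deleteVerts T).coe.oddComponents.ncard := by
  obtain ⟨T, hT⟩ := exists_isTutteViolator h hV
  refine ⟨T, ?_⟩
  -- Tutte gives a surplus of one; it cannot be exactly one, by parity.
  have hodd := odd_ncard_oddComponents (G := ((⊤ : G.Subgraph).deleteVerts T).coe)
  have hcard : Nat.card ((⊤ : G.Subgraph).deleteVerts T).verts + T.ncard = Nat.card V := by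
    rw [Subgraph.deleteVerts_verts, Subgraph.verts_top, ← Set.compl_eq_univ_sdiff,
      Nat.card_coe_set_eq, add_comm, Set.ncard_add_ncard_compl]
  unfold IsTutteViolator at hT
  grind

lemma exists_isPerfectMatching_of_induce_compl_pair {u v : V} (huv : G.Adj u v)
    {M : (G.induce ({u, v}ᶜ : Set V)).Subgraph} (hM : M.IsPerfectMatching) :
    ∃ N : G.Subgraph, N.IsPerfectMatching ∧ s(u, v) ∈ N.edgeSet := by
  let f := Embedding.induce (G := G) ({u, v}ᶜ : Set V)
  have hMf : (M.map f.toHom).IsMatching := hM.1.map f.toHom f.injective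
  have hverts : (M.map f.toHom).verts = {u, v}ᶜ := by
    rw [Subgraph.map_verts, Subgraph.isSpanning_iff.1 hM.2, Set.image_univ]
    exact Subtype.range_coe
  have huvM := Subgraph.IsMatching.subgraphOfAdj huv
  refine ⟨M.map f.toHom ⊔ G.subgraphOfAdj huv, ⟨hMf.sup huvM ?_, ?_⟩, by simp⟩
  · rw [hMf.support_eq_verts, huvM.support_eq_verts, hverts]
    exact disjoint_compl_left
  · rw [Subgraph.isSpanning_iff, Subgraph.verts_sup, hverts]
    exact Set.compl_union_self _

variable [Fintype V]

lemma exists_isWeakBarrier_of_not_isMatchingCovered (hV : Even (Fintype.card V))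
    (h : ¬ IsMatchingCovered G) : ∃ S : Finset V, 2 ≤ #S ∧ IsWeakBarrier G S := by
  simp only [IsMatchingCovered, Sym2.forall, mem_edgeSet, not_forall] at h
  obtain ⟨u, v, huv, hno⟩ := h
  have hpair : ({u, v} : Set V).ncard = 2 := Set.ncard_pair huv.ne
  have heven : Even (Nat.card ({u, v}ᶜ : Set V)) := by
    have hcard := Set.ncard_add_ncard_compl ({u, v} : Set V)
    rw [Nat.card_eq_fintype_card] at hcard
    rw [Nat.card_coe_set_eq]
    grind
  obtain ⟨T, hT⟩ := exists_ncard_add_two_le_ncard_oddComponents heven fun M hM =>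
    hno (exists_isPerfectMatching_of_induce_compl_pair huv hM)
  let S : Set V := Subtype.val '' T ∪ {u, v}
  have hS : S.ncard = T.ncard + 2 := by
    rw [Set.ncard_union_eq ?_, hpair, Set.ncard_image_of_injective _ Subtype.val_injective]
    exact Set.disjoint_left.2 (by rintro _ ⟨a, -, rfl⟩; exact a.2)
  refine ⟨S.toFinset, ?_, ?_⟩
  · rw [← Set.ncard_eq_toFinset_card', hS]
    omega
  · rw [IsWeakBarrier, ← Set.ncard_eq_toFinset_card', hS, Set.coe_toFinset]
    exact hT.trans ((Set.ncard_le_card _).trans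
      (card_connectedComponent_deleteVerts_induce_compl_le G T))

lemma card_coe_compl_add_card [DecidableEq V] (S : Finset V) :
    Fintype.card ((S : Set V)ᶜ : Set V) + #S = Fintype.card V := by
  rw [Fintype.card_compl_set, ← Set.toFinset_card, toFinset_coe,
    Nat.sub_add_cancel (card_le_univ S)]

namespace IsWeakBarrier

variable {S : Finset V}

lemma two_mul_card_le (hS : IsWeakBarrier G S) : 2 * #S ≤ Fintype.card V := by
  have hle := Nat.card_le_card_of_surjective
    (G.induce (S : Set V)ᶜ).connectedComponentMk Quot.mk_surjective
  rw [Nat.card_eq_fintype_card (α := ((S : Set V)ᶜ : Set V))] at hle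
  have := hS.trans hle
  have := card_coe_compl_add_card S
  omega

variable [DecidableRel G.Adj] [DecidableEq V]

lemma degree_induce_compl_add_two_mul_card_le (hS : IsWeakBarrier G S)
    (v : ((S : Set V)ᶜ : Set V)) :
    (G.induce (S : Set V)ᶜ).degree v + 2 * #S ≤ Fintype.card V := by
  have := degree_add_card_connectedComponent_le (G := G.induce (S : Set V)ᶜ) v
  have := card_coe_compl_add_card S
  unfold IsWeakBarrier at hS
  omega

end IsWeakBarrier

lemma degree_induce_compl_add_card_add_two_lt [DecidableRel G.Adj] [DecidableEq V] {S : Finset V}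
    (hS : 2 ≤ Nat.card (G.induce (S : Set V)ᶜ).ConnectedComponent)
    (hdeg : ∀ v, #S < G.degree v) (v : ((S : Set V)ᶜ : Set V)) :
    (G.induce (S : Set V)ᶜ).degree v + #S + 2 < Fintype.card V := by
  have : Nontrivial (G.induce (S : Set V)ᶜ).ConnectedComponent :=
    Finite.one_lt_card_iff_nontrivial.1 hS
  obtain ⟨C, hC⟩ := exists_ne ((G.induce (S : Set V)ᶜ).connectedComponentMk v)
  obtain ⟨w, rfl⟩ := C.exists_rep
  have hvw := degree_add_degree_add_two_le_of_not_reachable fun hvw =>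
    hC (ConnectedComponent.sound hvw).symm
  have hw : 0 < (G.induce (S : Set V)ᶜ).degree w := by
    rw [degree_induce_compl, card_pos, sdiff_nonempty]
    exact fun hsub => (card_le_card hsub).not_gt (hdeg w)
  have := card_coe_compl_add_card S
  omega

end WeakBarrier

section TwoWeights

open Matrix

variable {n : ℕ} {G : SimpleGraph (Fin n)} {S : Finset (Fin n)}

lemma specRad_le_of_two_weights [NeZero n] {a b c d : ℝ} (ha : 0 < a) (hb : 0 < b)
    (hd : ∀ v, ((G.induce (S : Set (Fin n))ᶜ).degree v : ℝ) ≤ d)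
    (hS : (#S - 1) * a + (n - #S) * b ≤ c * a) (hSc : #S * a + d * b ≤ c * b) :
    specRad G ≤ c := by
  refine specRad_le_of_adjMatrix_mulVec_le (y := fun v => if v ∈ S then a else b)
    (fun v => by split_ifs <;> assumption) fun v => ?_
  rw [adjMatrix_mulVec_ite_mem_apply, Pi.smul_apply, smul_eq_mul]
  by_cases hv : v ∈ S
  · have hin : (#(G.neighborFinset v ∩ S) : ℝ) ≤ #S - 1 := by
      rw [← Nat.cast_pred (card_pos.2 ⟨v, hv⟩), ← card_erase_of_mem hv, Nat.cast_le]
      refine card_le_card fun w hw => ?_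
      rw [mem_inter, mem_neighborFinset] at hw
      exact mem_erase.2 ⟨hw.1.ne', hw.2⟩
    have hout : (#(G.neighborFinset v \ S) : ℝ) ≤ n - #S := by
      rw [le_sub_iff_add_le]
      exact_mod_cast (card_sdiff_add_card _ _).trans_le (card_finset_fin_le _)
    rw [if_pos hv]
    calc _ ≤ (#S - 1) * a + (n - #S) * b := by gcongr
      _ ≤ c * a := hS
  · have hin : (#(G.neighborFinset v ∩ S) : ℝ) ≤ #S :=
      Nat.cast_le.2 (card_le_card inter_subset_right)
    have hout : (#(G.neighborFinset v \ S) : ℝ) ≤ d :=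
      (Nat.cast_le.2 (degree_induce_compl S ⟨v, hv⟩).ge).trans (hd ⟨v, hv⟩)
    rw [if_neg hv]
    calc _ ≤ #S * a + d * b := by gcongr
      _ ≤ c * b := hSc

lemma specRad_le_sub_two_of_three_le_card (hn : 7 ≤ n) (h3 : 3 ≤ #S) (hS : IsWeakBarrier G S) :
    specRad G ≤ n - 2 := by
  have : NeZero n := ⟨by omega⟩
  have hn7 : (7 : ℝ) ≤ n := by exact_mod_cast hn
  have hs3 : (3 : ℝ) ≤ #S := by exact_mod_cast h3
  have hsn : (2 * #S : ℝ) ≤ n := by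
    exact_mod_cast hS.two_mul_card_le.trans_eq (Fintype.card_fin n)
  -- With these weights the row sums outside `S` are exactly `n - 2` times the weight.
  refine specRad_le_of_two_weights (S := S) (a := 2 * #S - 2) (b := #S) (d := n - 2 * #S)
    (by linarith) (by linarith) (fun v => ?_) ?_ (by linarith)
  · rw [le_sub_iff_add_le]
    exact_mod_cast (hS.degree_induce_compl_add_two_mul_card_le v).trans_eq (Fintype.card_fin n)
  · have key : (2 : ℝ) ≤ (#S - 2) * (n - #S - 2) := by
      rcases h3.eq_or_lt with h | h
      · rw [← h]
        push_cast
        linarith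
      · have : (4 : ℝ) ≤ #S := by exact_mod_cast h
        nlinarith
    linarith

lemma specRad_lt_Hgraph_six_three {G : SimpleGraph (Fin 6)} {S : Finset (Fin 6)} (h3 : #S = 3)
    (hS : IsWeakBarrier G S) : specRad G < specRad (Hgraph 6 3) := by
  have hdeg (v) : (G.induce (S : Set (Fin 6))ᶜ).degree v = 0 := by
    have := hS.degree_induce_compl_add_two_mul_card_le v
    rw [Fintype.card_fin] at this
    omega
  -- The extremal case is `K₃ ∨ 3K₁`, of spectral radius `1 + √10 > n - 2`; its Perron vector is
  -- nearly `25 : 18` on the two parts.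
  have hG : specRad G ≤ 25 / 6 := by
    refine specRad_le_of_two_weights (S := S) (a := 25) (b := 18) (d := 0) (by norm_num)
      (by norm_num) (fun v => by rw [hdeg, Nat.cast_zero]) ?_ ?_ <;> norm_num [h3]
  have hH := le_specRad_Hgraph (m := 5) (k := 2) (by norm_num) (1 / 2)
  norm_num at hH
  linarith

lemma specRad_le_sub_two_of_card_eq_two (h2 : #S = 2) (hS : IsWeakBarrier G S)
    (hdeg : ∀ v, 3 ≤ G.degree v) : specRad G ≤ n - 2 := by
  have hcomp : 2 ≤ Nat.card (G.induce (S : Set (Fin n))ᶜ).ConnectedComponent := h2 ▸ hS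
  have hlt (v) : (G.induce (S : Set (Fin n))ᶜ).degree v + 5 ≤ n := by
    have := degree_induce_compl_add_card_add_two_lt hcomp (h2 ▸ hdeg) v
    rw [Fintype.card_fin] at this
    omega
  have hn5 : (5 : ℝ) ≤ n := by
    obtain ⟨⟨C⟩, -⟩ := Nat.card_pos_iff.1 (zero_lt_two.trans_le hcomp)
    obtain ⟨v, -⟩ := C.exists_rep
    exact_mod_cast (Nat.le_add_left _ _).trans (hlt v)
  have : NeZero n := ⟨by rintro rfl; norm_num at hn5⟩
  refine specRad_le_of_two_weights (S := S) (a := 3) (b := 2) (d := n - 5) (by norm_num)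
    (by norm_num) (fun v => ?_) ?_ ?_
  · rw [le_sub_iff_add_le]
    exact_mod_cast hlt v
  · rw [h2]
    push_cast
    linarith
  · rw [h2]
    push_cast
    linarith

lemma specRad_lt_Hgraph_of_not_isMatchingCovered (he : Even n) (h : ¬ IsMatchingCovered G)
    (hdeg : ∀ v, 3 ≤ G.degree v) : specRad G < specRad (Hgraph n 3) := by
  obtain ⟨S, h2, hS⟩ := exists_isWeakBarrier_of_not_isMatchingCovered
    ((Fintype.card_fin n).symm ▸ he) h
  have hn := hS.two_mul_card_le
  rw [Fintype.card_fin] at hn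
  have hlt := sub_two_lt_specRad_Hgraph (n := n) (γ := 3) (by omega) (by omega)
  rcases h2.eq_or_lt with h2 | h3
  · exact (specRad_le_sub_two_of_card_eq_two h2.symm hS hdeg).trans_lt hlt
  rcases lt_or_ge n 7 with hn7 | hn7
  · obtain rfl : n = 6 := by omega
    exact specRad_lt_Hgraph_six_three (by omega) hS
  · exact (specRad_le_sub_two_of_three_le_card hn7 h3 hS).trans_lt hlt

end TwoWeights

/-- For even n ≥ 4, every n-vertex graph that is not matching covered satisfies
ρ(G) ≤ ρ(H_{n,3}), with equality iff G ≅ H_{n,3}. -/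
theorem spectral_extremal_non_matchingCovered {n : ℕ} (hn : 4 ≤ n) (he : Even n)
    (G : SimpleGraph (Fin n)) (h : ¬ IsMatchingCovered G) :
    specRad G ≤ specRad (Hgraph n 3) ∧
      (specRad G = specRad (Hgraph n 3) ↔ Nonempty (G ≃g Hgraph n 3)) := by
  by_cases hdeg : ∃ w, G.degree w < 3
  · obtain ⟨w, hw⟩ := hdeg
    exact ⟨specRad_le_Hgraph_of_degree_lt hw,
      specRad_eq_Hgraph_iff_of_degree_lt (by omega) (by omega) hw⟩
  · push Not at hdeg
    have hlt := specRad_lt_Hgraph_of_not_isMatchingCovered he h hdeg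
    exact ⟨hlt.le, fun heq => absurd heq hlt.ne, fun ⟨f⟩ => specRad_eq_of_iso f⟩
end

section
/- Let 1 ≤ a ≤ b with b ≥ 2 and n ≥ 3a+4 (and na even when a = b). If G is an n-vertex graph that is not [a,b]-covered, then e(G) ≤ binomial(n-1, 2) + a - 1, with equality if and only if G ≅ H_{n,a}. -/
open SimpleGraph Finset
open scoped Classical

/-- The number of edges of a finite graph. -/
noncomputable def edgeCount {V : Type*} [Fintype V] (G : SimpleGraph V) : ℕ :=
  Nat.card G.edgeSet

/-- There is an [a,b]-factor of G (a spanning subgraph F with a ≤ d_F(v) ≤ b for all v)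
containing the edge uv. -/
def HasABFactorThrough {V : Type*} [Fintype V] (G : SimpleGraph V) (a b : ℕ)
    (u v : V) : Prop :=
  ∃ F : SimpleGraph V, F ≤ G ∧ F.Adj u v ∧
    ∀ w : V, a ≤ (F.neighborSet w).ncard ∧ (F.neighborSet w).ncard ≤ b

/-- G is [a,b]-covered: every edge of G lies in some [a,b]-factor. -/
def IsABCovered {V : Type*} [Fintype V] (G : SimpleGraph V) (a b : ℕ) : Prop :=
  ∀ u v : V, G.Adj u v → HasABFactorThrough G a b u v

/-!
Suppose `G` misses at most `n - a` edges and has minimum degree at least `a`. To cover an edge `uv`,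
look for a factor `F` through `uv` with all degrees `a`, or `a + 1` at one end of `uv` if parity
requires it. If there is none, take a subgraph of `G - uv` with as many edges as possible within the
prescribed degrees; by parity it has two deficiencies, at vertices `y` and `z`. Exchanging an edge
along an alternating path of length two shifts the deficiency at `y` to any of its other ends, so if
`y` and `z` are chosen to miss as few edges of `G` as possible in total, every vertex
reachable in this way misses at least as many edges as `y`. There are many such vertices and `y`
is nonadjacent to about half of all vertices, so more edges are missing than `n - a`. For `a = 1`
the same argument gives perfect and near-perfect matchings, to which a few edges are added.

A vertex of degree less than `a` already misses `n - a` edges, so these are all the missing ones and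
`G` is complete off that vertex.
-/

namespace ABFactor

variable {V : Type*}

/-! ### Degree vectors and edge counts -/

/-- The degree of `w` in `F`, free of any decidability instance. -/
noncomputable def deg (F : SimpleGraph V) (w : V) : ℕ :=
  (F.neighborSet w).ncard

lemma deg_sup_le (F F' : SimpleGraph V) : deg (F ⊔ F') ≤ deg F + deg F' := fun w => by
  rw [Pi.add_apply, deg, neighborSet_sup]
  exact Set.ncard_union_le _ _

lemma deg_edge {s t : V} (hst : s ≠ t) :
    deg (edge s t) = Pi.single s 1 + Pi.single t 1 := by
  funext w
  have hnbr : (edge s t).neighborSet w = if w = s then {t} else if w = t then {s} else ∅ := by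
    ext x
    rw [mem_neighborSet, edge_adj]
    grind
  rw [deg, hnbr, Pi.add_apply, Pi.single_apply, Pi.single_apply]
  grind [Set.ncard_singleton, Set.ncard_empty]

lemma edge_sup_edge_le {G : SimpleGraph V} {u v x w : V} (huv : G.Adj u v) (hxw : G.Adj x w) :
    edge u v ⊔ edge x w ≤ G :=
  sup_le ((edge_le_iff _).2 (.inr huv)) ((edge_le_iff _).2 (.inr hxw))

lemma deg_eq_degree [Fintype V] (F : SimpleGraph V) (w : V) : deg F w = F.degree w := by
  rw [deg, ← Nat.card_coe_set_eq, Nat.card_eq_fintype_card, card_neighborSet_eq_degree]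

section Finite

variable [Finite V]

lemma deg_pos_iff {F : SimpleGraph V} {w : V} : 0 < deg F w ↔ ∃ x, F.Adj w x :=
  Set.ncard_pos

lemma deg_mono {F F' : SimpleGraph V} (h : F ≤ F') : deg F ≤ deg F' :=
  fun _ => Set.ncard_le_ncard (neighborSet_mono h _)

lemma deg_sup_of_disjoint {F F' : SimpleGraph V} (h : Disjoint F F') :
    deg (F ⊔ F') = deg F + deg F' := by
  funext w
  simp only [deg, Pi.add_apply, neighborSet_sup]
  refine Set.ncard_union_eq (Set.disjoint_left.2 fun x hx hx' => ?_)
  exact (h.le_bot : F ⊓ F' ≤ ⊥) ⟨hx, hx'⟩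

lemma deg_sdiff_add_deg {F H : SimpleGraph V} (h : F ≤ H) : deg (H \ F) + deg F = deg H := by
  rw [← deg_sup_of_disjoint disjoint_sdiff_self_left, sdiff_sup_cancel h]

lemma deg_sup_edge {F : SimpleGraph V} {s t : V} (hst : s ≠ t) (h : ¬F.Adj s t) :
    deg (F ⊔ edge s t) = deg F + Pi.single s 1 + Pi.single t 1 := by
  rw [deg_sup_of_disjoint ((disjoint_edge _).2 h), deg_edge hst, add_assoc]

lemma deg_sdiff_edge {F : SimpleGraph V} {s t : V} (h : F.Adj s t) :
    deg (F \ edge s t) + Pi.single s 1 + Pi.single t 1 = deg F := by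
  rw [add_assoc, ← deg_edge h.ne, deg_sdiff_add_deg ((edge_le_iff _).2 (.inr h))]

lemma deg_edge_sup_edge {u v x w : V} (huv : u ≠ v) (hxu : x ≠ u) (hxv : x ≠ v) (hxw : x ≠ w) :
    deg (edge u v ⊔ edge x w) =
      Pi.single u 1 + Pi.single v 1 + Pi.single x 1 + Pi.single w 1 := by
  rw [deg_sup_edge hxw (by simp [edge_adj, hxu, hxv]), deg_edge huv]

lemma deg_exchange {F : SimpleGraph V} {y q p : V} (hyq : ¬F.Adj y q) (hqp : F.Adj q p)
    (hne : y ≠ q) :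
    deg ((F ⊔ edge y q) \ edge q p) + Pi.single p 1 = deg F + Pi.single y 1 := by
  have hadj : (F ⊔ edge y q).Adj q p := .inl hqp
  have h := deg_sdiff_edge hadj
  rw [deg_sup_edge hne hyq] at h
  funext w
  have := congrFun h w
  simp only [Pi.add_apply] at this ⊢
  omega

lemma sum_deg_le_sum_deg {F : SimpleGraph V} {A P : Finset V}
    (h : ∀ q ∈ A, ∀ p, F.Adj q p → p ∈ P) : ∑ q ∈ A, deg F q ≤ ∑ p ∈ P, deg F p := by
  have := Fintype.ofFinite V
  simp only [deg_eq_degree, ← card_neighborFinset_eq_degree]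
  calc ∑ q ∈ A, #(F.neighborFinset q)
      = ∑ q ∈ A, #(P.bipartiteAbove F.Adj q) := by
        refine sum_congr rfl fun q hq => congrArg card ?_
        ext p
        simpa [mem_bipartiteAbove] using h q hq p
    _ = ∑ p ∈ P, #(A.bipartiteBelow F.Adj p) := sum_card_bipartiteAbove_eq_sum_card_bipartiteBelow _
    _ ≤ ∑ p ∈ P, #(F.neighborFinset p) := by
        refine sum_le_sum fun p _ => card_le_card fun q hq => ?_
        simpa using ((mem_bipartiteBelow _).1 hq).2.symm

end Finite

section Fintype

variable [Fintype V]

lemma deg_add_deg_compl (G : SimpleGraph V) (w : V) :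
    deg G w + deg Gᶜ w + 1 = Fintype.card V := by
  have := G.degree_lt_card_verts w
  rw [deg_eq_degree, deg_eq_degree, degree_compl]
  omega

lemma edgeCount_eq_card_edgeFinset (F : SimpleGraph V) : edgeCount F = #F.edgeFinset := by
  rw [edgeCount, Nat.card_eq_fintype_card, card_edgeSet]

lemma sum_deg (F : SimpleGraph V) : ∑ w, deg F w = 2 * edgeCount F := by
  simp only [deg_eq_degree, sum_degrees_eq_twice_card_edges, edgeCount_eq_card_edgeFinset]

lemma edgeCount_sup_of_disjoint {F F' : SimpleGraph V} (h : Disjoint F F') :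
    edgeCount (F ⊔ F') = edgeCount F + edgeCount F' := by
  simp only [edgeCount, Nat.card_coe_set_eq, edgeSet_sup]
  exact Set.ncard_union_eq (disjoint_edgeSet.2 h)

lemma edgeCount_sup_edge {F : SimpleGraph V} {s t : V} (hst : s ≠ t) (h : ¬F.Adj s t) :
    edgeCount (F ⊔ edge s t) = edgeCount F + 1 := by
  have hedge : edgeCount (edge s t) = 1 := by
    rw [edgeCount, edgeSet_edge_of_ne hst, Nat.card_unique]
  rw [edgeCount_sup_of_disjoint ((disjoint_edge _).2 h), hedge]

lemma edgeCount_add_edgeCount_compl (G : SimpleGraph V) :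
    edgeCount G + edgeCount Gᶜ = (Fintype.card V).choose 2 := by
  rw [← edgeCount_sup_of_disjoint disjoint_compl_right, sup_compl_eq_top,
    edgeCount_eq_card_edgeFinset, ← card_edgeFinset_top_eq_card_choose_two]
  congr!

lemma edgeCount_add_edgeCount_compl_add_one (G : SimpleGraph V) (hcard : 0 < Fintype.card V) :
    edgeCount G + (edgeCount Gᶜ + 1) = (Fintype.card V - 1).choose 2 + Fintype.card V := by
  have hcount := edgeCount_add_edgeCount_compl G
  have hpascal := Nat.choose_eq_choose_pred_add hcard two_pos
  rw [show 2 - 1 = 1 from rfl, Nat.choose_one_right] at hpascal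
  omega

lemma edgeCount_deleteIncidenceSet_add (K : SimpleGraph V) (x : V) :
    edgeCount (K.deleteIncidenceSet x) + deg K x = edgeCount K := by
  have hle := K.degree_le_card_edgeFinset x
  have hcard := K.card_edgeFinset_deleteIncidenceSet x
  simp only [edgeCount_eq_card_edgeFinset, deg_eq_degree]
  convert! Nat.sub_add_cancel hle using 2
  convert! hcard

lemma deg_le_edgeCount (K : SimpleGraph V) (x : V) : deg K x ≤ edgeCount K :=
  le_of_le_of_eq (Nat.le_add_left _ _) (edgeCount_deleteIncidenceSet_add K x)

lemma deg_add_deg_le (K : SimpleGraph V) {x y : V} (hxy : x ≠ y) :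
    deg K x + deg K y ≤ edgeCount K + 1 := by
  have hy : deg K y ≤ deg (K.deleteIncidenceSet x) y + 1 := by
    refine (Set.ncard_le_ncard fun w hw => ?_).trans
      (Set.ncard_insert_le x ((K.deleteIncidenceSet x).neighborSet y))
    by_cases hwx : w = x
    · exact .inl hwx
    · exact .inr (deleteIncidenceSet_adj.2 ⟨hw, hxy.symm, hwx⟩)
  have hdel := edgeCount_deleteIncidenceSet_add K x
  have hle := deg_le_edgeCount (K.deleteIncidenceSet x) y
  omega

lemma edgeCount_exchange {F : SimpleGraph V} {y q p : V} (hyq : ¬F.Adj y q) (hqp : F.Adj q p)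
    (hne : y ≠ q) : edgeCount ((F ⊔ edge y q) \ edge q p) = edgeCount F := by
  have h := congrArg (fun f => ∑ w, f w) (deg_exchange hyq hqp hne)
  simp only [Pi.add_apply, sum_add_distrib, sum_deg, sum_pi_single', mem_univ, if_true] at h
  omega

end Fintype

/-! ### Subgraphs with prescribed degrees -/

lemma exists_add_single_le {f g : V → ℕ} (h : f < g) : ∃ z, f + Pi.single z 1 ≤ g := by
  obtain ⟨hle, z, hz⟩ := Pi.lt_def.1 h
  refine ⟨z, fun w => ?_⟩
  obtain rfl | hw := eq_or_ne w z
  · simpa using hz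
  · simpa [hw] using hle w

/-- `F` is a subgraph of `H` whose degrees stay below `g`, with one unit to spare at `y` and one
at `z`; two units when `y = z`. -/
structure IsDeficientAt (H : SimpleGraph V) (g : V → ℕ) (F : SimpleGraph V) (y z : V) : Prop where
  le : F ≤ H
  deg_add_le : deg F + Pi.single y 1 + Pi.single z 1 ≤ g

namespace IsDeficientAt

variable {H F : SimpleGraph V} {g : V → ℕ} {y z q p : V}

lemma symm (h : IsDeficientAt H g F y z) : IsDeficientAt H g F z y :=
  ⟨h.le, by simpa only [add_right_comm] using h.deg_add_le⟩

lemma deg_le (h : IsDeficientAt H g F y z) : deg F ≤ g := by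
  refine le_trans ?_ h.deg_add_le
  rw [add_assoc]
  exact le_self_add

lemma deg_lt (h : IsDeficientAt H g F y z) : deg F y < g y := by
  have := h.deg_add_le y
  simp only [Pi.add_apply, Pi.single_eq_same] at this
  omega

variable [Finite V]

lemma exchange (h : IsDeficientAt H g F y z) (hyq : (H \ F).Adj y q) (hqp : F.Adj q p) :
    IsDeficientAt H g ((F ⊔ edge y q) \ edge q p) p z := by
  refine ⟨sdiff_le.trans (sup_le h.le ((edge_le_iff _).2 (.inr hyq.1))), ?_⟩
  rw [deg_exchange hyq.2 hqp hyq.ne]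
  exact h.deg_add_le

end IsDeficientAt

variable [Fintype V]

lemma exists_isDeficientAt {H F : SimpleGraph V} {g : V → ℕ} (hg : Even (∑ w, g w))
    (hF : F ≤ H) (hle : deg F ≤ g) (hne : deg F ≠ g) : ∃ y z, IsDeficientAt H g F y z := by
  obtain ⟨y, hy⟩ := exists_add_single_le (lt_of_le_of_ne hle hne)
  have hy_ne : deg F + Pi.single y 1 ≠ g := by
    rintro rfl
    simp [sum_add_distrib, sum_deg, parity_simps] at hg
  obtain ⟨z, hz⟩ := exists_add_single_le (lt_of_le_of_ne hy hy_ne)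
  exact ⟨y, z, hF, hz⟩

/-- Among all subgraphs of `H` with degrees at most `g`, the graph `F` has the most edges, and among
all subgraphs of that size with two deficiencies, `F` has them at places `y` and `z` of least total
weight. -/
structure IsOptimal (H : SimpleGraph V) (g wt : V → ℕ) (F : SimpleGraph V) (y z : V) : Prop
    extends IsDeficientAt H g F y z where
  edgeCount_le : ∀ F' ≤ H, deg F' ≤ g → edgeCount F' ≤ edgeCount F
  weight_le : ∀ F' y' z', IsDeficientAt H g F' y' z' → edgeCount F' = edgeCount F →
    wt y + wt z ≤ wt y' + wt z'

namespace IsOptimal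

variable {H F : SimpleGraph V} {g wt : V → ℕ} {y z q p : V}

lemma symm (h : IsOptimal H g wt F y z) : IsOptimal H g wt F z y where
  toIsDeficientAt := h.toIsDeficientAt.symm
  edgeCount_le := h.edgeCount_le
  weight_le F' y' z' hF' hcard := add_comm (wt y) (wt z) ▸ h.weight_le F' y' z' hF' hcard

lemma adj_of_isDeficientAt (h : IsOptimal H g wt F y z) {F' : SimpleGraph V} {s t : V}
    (hF' : IsDeficientAt H g F' s t) (hcard : edgeCount F' = edgeCount F) (hst : H.Adj s t) :
    F'.Adj s t := by
  by_contra hadj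
  have hle := h.edgeCount_le (F' ⊔ edge s t) (sup_le hF'.le ((edge_le_iff _).2 (.inr hst)))
    (deg_sup_edge hst.ne hadj ▸ hF'.deg_add_le)
  rw [edgeCount_sup_edge hst.ne hadj] at hle
  omega

lemma deg_eq (h : IsOptimal H g wt F y z) (hyq : (H \ F).Adj y q) : deg F q = g q := by
  refine le_antisymm (h.deg_le q) (not_lt.1 fun hq => hyq.2 ?_)
  refine h.adj_of_isDeficientAt ⟨h.le, fun w => ?_⟩ rfl hyq.1
  have hw := h.deg_le w
  have hy := h.deg_lt
  have hne := hyq.ne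
  simp only [Pi.add_apply, Pi.single_apply]
  grind

lemma not_adj (h : IsOptimal H g wt F y z) (hyq : (H \ F).Adj y q) (hzp : (H \ F).Adj z p) :
    ¬F.Adj q p := fun hqp => by
  have : H.Adj y z → F.Adj y z := h.adj_of_isDeficientAt h.toIsDeficientAt rfl
  have hpz := h.adj_of_isDeficientAt (h.exchange hyq hqp)
    (edgeCount_exchange hyq.2 hqp hyq.ne) hzp.1.symm
  have hzp' := hzp.2
  have hne := hqp.ne
  simp only [sdiff_adj, sup_adj, edge_adj] at hpz hyq hzp'
  grind [SimpleGraph.Adj.symm]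

lemma weight_le_of_exchange (h : IsOptimal H g wt F y z) (hyq : (H \ F).Adj y q)
    (hqp : F.Adj q p) : wt y ≤ wt p :=
  le_of_add_le_add_right
    (h.weight_le _ p z (h.exchange hyq hqp) (edgeCount_exchange hyq.2 hqp hyq.ne))

end IsOptimal

theorem exists_isOptimal {H : SimpleGraph V} {g : V → ℕ} (wt : V → ℕ) (hg : Even (∑ w, g w))
    (hno : ¬∃ F ≤ H, deg F = g) : ∃ F y z, IsOptimal H g wt F y z ∧ wt z ≤ wt y := by
  obtain ⟨F₀, ⟨hF₀H, hF₀g⟩, hmax⟩ := Set.exists_max_image {F | F ≤ H ∧ deg F ≤ g} edgeCount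
    (Set.toFinite _) ⟨⊥, bot_le, fun w => by simp [deg]⟩
  obtain ⟨y₀, z₀, h₀⟩ := exists_isDeficientAt hg hF₀H hF₀g fun h => hno ⟨F₀, hF₀H, h⟩
  obtain ⟨⟨F, y, z⟩, ⟨hF, hcard⟩, hmin⟩ := Set.exists_min_image
    {x : SimpleGraph V × V × V | IsDeficientAt H g x.1 x.2.1 x.2.2 ∧ edgeCount x.1 = edgeCount F₀}
    (fun x => wt x.2.1 + wt x.2.2) (Set.toFinite _) ⟨(F₀, y₀, z₀), h₀, rfl⟩
  have hopt : IsOptimal H g wt F y z := ⟨hF, fun F' hF' hg' => hcard ▸ hmax F' ⟨hF', hg'⟩,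
    fun F' y' z' hF' hcard' => hmin (F', y', z') ⟨hF', hcard'.trans hcard⟩⟩
  obtain hle | hle := le_total (wt z) (wt y)
  · exact ⟨F, y, z, hopt, hle⟩
  · exact ⟨F, z, y, hopt.symm, hle⟩

/-! ### Counting at an optimal subgraph -/

/-- The vertices that `F` can still be joined to from `y` inside `H`: the first steps of alternating
paths leaving a deficient vertex `y`. -/
noncomputable def freeNeighbors (H F : SimpleGraph V) (y : V) : Finset V :=
  univ.filter ((H \ F).Adj y)

/-- The vertices two alternating steps away from `y`: those to which a deficiency at `y` can be
shifted by exchanging one edge. -/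
noncomputable def exchangeEnds (H F : SimpleGraph V) (y : V) : Finset V :=
  univ.filter fun p => ∃ q ∈ freeNeighbors H F y, F.Adj q p

lemma mem_freeNeighbors {H F : SimpleGraph V} {y q : V} :
    q ∈ freeNeighbors H F y ↔ (H \ F).Adj y q := by
  simp [freeNeighbors]

lemma mem_exchangeEnds {H F : SimpleGraph V} {y p : V} :
    p ∈ exchangeEnds H F y ↔ ∃ q, (H \ F).Adj y q ∧ F.Adj q p := by
  simp [exchangeEnds, freeNeighbors]

lemma notMem_exchangeEnds_self {H F : SimpleGraph V} {y : V} : y ∉ exchangeEnds H F y := fun h => by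
  obtain ⟨q, hyq, hqy⟩ := mem_exchangeEnds.1 h
  exact hyq.2 hqy.symm

lemma card_freeNeighbors_add_deg {H F : SimpleGraph V} (h : F ≤ H) (y : V) :
    #(freeNeighbors H F y) + deg F y = deg H y := by
  rw [← deg_sdiff_add_deg h, Pi.add_apply, deg_eq_degree (H \ F), ← card_neighborFinset_eq_degree]
  congr
  ext q
  simp [freeNeighbors]

lemma IsDeficientAt.deg_lt_card_freeNeighbors_add {H F : SimpleGraph V} {g : V → ℕ} {y z : V}
    (h : IsDeficientAt H g F y z) :
    deg H y + 1 + (if y = z then 1 else 0) ≤ #(freeNeighbors H F y) + g y := by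
  have hcard := card_freeNeighbors_add_deg h.le y
  have hdeg := h.deg_add_le y
  simp only [Pi.add_apply, Pi.single_eq_same, Pi.single_apply] at hdeg
  omega

namespace IsOptimal

variable {H F : SimpleGraph V} {g wt : V → ℕ} {y z : V} {c k M : ℕ}

lemma sum_freeNeighbors_le (h : IsOptimal H g wt F y z) :
    ∑ q ∈ freeNeighbors H F y, g q + (if z ∈ exchangeEnds H F y then 1 else 0) ≤
      ∑ p ∈ exchangeEnds H F y, g p := by
  have hdeg : deg F + Pi.single z 1 ≤ g :=
    le_trans (by rw [add_right_comm]; exact le_self_add) h.deg_add_le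
  calc _ = ∑ q ∈ freeNeighbors H F y, deg F q + ∑ p ∈ exchangeEnds H F y, Pi.single z 1 p := by
        rw [sum_pi_single']
        exact congrArg (· + _) (sum_congr rfl fun q hq => (h.deg_eq (mem_freeNeighbors.1 hq)).symm)
    _ ≤ ∑ p ∈ exchangeEnds H F y, deg F p + ∑ p ∈ exchangeEnds H F y, Pi.single z 1 p := by
        refine Nat.add_le_add_right (sum_deg_le_sum_deg fun q hq p hqp => ?_) _
        exact mem_exchangeEnds.2 ⟨q, mem_freeNeighbors.1 hq, hqp⟩
    _ ≤ _ := by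
        rw [← sum_add_distrib]
        exact sum_le_sum fun p _ => hdeg p

lemma disjoint_exchangeEnds_freeNeighbors (h : IsOptimal H g wt F y z) :
    Disjoint (exchangeEnds H F y) (freeNeighbors H F z) := by
  refine disjoint_left.2 fun p hp hzp => ?_
  obtain ⟨q, hyq, hqp⟩ := mem_exchangeEnds.1 hp
  exact h.not_adj hyq (mem_freeNeighbors.1 hzp) hqp

lemma card_exchangeEnds_add_card_freeNeighbors_le (h : IsOptimal H g wt F y z) :
    #(exchangeEnds H F y) + #(freeNeighbors H F z) + 1 +
      (if y = z ∨ z ∈ exchangeEnds H F y then 0 else 1) ≤ Fintype.card V := by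
  have hyB : y ∉ freeNeighbors H F z := fun hy => by
    have hzy := mem_freeNeighbors.1 hy
    exact hzy.2 (h.adj_of_isDeficientAt h.toIsDeficientAt rfl hzy.1.symm).symm
  have hzB : z ∉ freeNeighbors H F z := fun hz => (mem_freeNeighbors.1 hz).ne rfl
  have hy := notMem_exchangeEnds_self (H := H) (F := F) (y := y)
  rw [← card_union_of_disjoint h.disjoint_exchangeEnds_freeNeighbors]
  set S := exchangeEnds H F y ∪ freeNeighbors H F z with hS
  have hyS : y ∉ S := by simp [hS, hy, hyB]
  split_ifs with hz
  · rw [add_zero, ← card_insert_of_notMem hyS]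
    exact card_le_univ _
  · have hzS : z ∉ insert y S := by grind
    rw [← card_insert_of_notMem hyS, ← card_insert_of_notMem hzS]
    exact card_le_univ _

lemma weight_le_of_mem_exchangeEnds (h : IsOptimal H g wt F y z) {p : V}
    (hp : p ∈ exchangeEnds H F y) : wt y ≤ wt p := by
  obtain ⟨q, hyq, hqp⟩ := mem_exchangeEnds.1 hp
  exact h.weight_le_of_exchange hyq hqp

lemma mul_card_exchangeEnds_le_sum (h : IsOptimal H g wt F y z) :
    wt y * (#(exchangeEnds H F y) + 1) +
      (if y = z ∨ z ∈ exchangeEnds H F y then 0 else wt z) ≤ ∑ w, wt w := by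
  have hy := notMem_exchangeEnds_self (H := H) (F := F) (y := y)
  have hP : wt y * (#(exchangeEnds H F y) + 1) ≤ ∑ p ∈ insert y (exchangeEnds H F y), wt p := by
    rw [mul_comm, ← card_insert_of_notMem hy, ← smul_eq_mul]
    refine card_nsmul_le_sum _ _ _ fun p hp => ?_
    obtain rfl | hp := mem_insert.1 hp
    exacts [le_rfl, h.weight_le_of_mem_exchangeEnds hp]
  split_ifs with hz
  · exact hP.trans (sum_le_univ_sum_of_nonneg fun _ => Nat.zero_le _)
  · have hzP : z ∉ insert y (exchangeEnds H F y) := by grind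
    calc _ ≤ ∑ p ∈ insert z (insert y (exchangeEnds H F y)), wt p := by
          rw [sum_insert hzP, add_comm]
          exact Nat.add_le_add_left hP _
      _ ≤ _ := sum_le_univ_sum_of_nonneg fun _ => Nat.zero_le _

theorem deg_add_deg_add_four_le (h : IsOptimal H g wt F y z)
    (hAP : #(freeNeighbors H F y) + (if z ∈ exchangeEnds H F y then 1 else 0) ≤
      #(exchangeEnds H F y) + c) :
    deg H y + deg H z + 4 ≤ Fintype.card V + g y + g z + c := by
  have hy := h.deg_lt_card_freeNeighbors_add
  have hz := h.symm.deg_lt_card_freeNeighbors_add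
  have hcard := h.card_exchangeEnds_add_card_freeNeighbors_le
  grind

theorem weight_mul_add_weight_le_sum (h : IsOptimal H g wt F y z) (hzy : wt z ≤ wt y)
    (hAP : #(freeNeighbors H F y) + (if z ∈ exchangeEnds H F y then 1 else 0) ≤
      #(exchangeEnds H F y) + c) (hk : k + g y + c ≤ deg H y + 2) :
    wt y * k + wt z ≤ ∑ w, wt w := by
  have hy := h.deg_lt_card_freeNeighbors_add
  have hsum := h.mul_card_exchangeEnds_le_sum
  split_ifs at hsum with hz
  · have hk' : k + 1 ≤ #(exchangeEnds H F y) + 1 := by grind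
    have := Nat.mul_le_mul_left (wt y) hk'
    grind
  · have hk' : k ≤ #(exchangeEnds H F y) + 1 := by grind
    have := Nat.mul_le_mul_left (wt y) hk'
    omega

theorem two_mul_weight_le (h : IsOptimal H g wt F y z) (hg : ∀ w, 1 ≤ g w) (hy : g y ≤ deg H y)
    (hM : ∀ w, w ≠ y → wt y + wt w ≤ M) : 2 * wt y ≤ M := by
  have hA := h.deg_lt_card_freeNeighbors_add
  obtain ⟨q, hq⟩ : (freeNeighbors H F y).Nonempty := card_pos.1 (by omega)
  have hyq := mem_freeNeighbors.1 hq
  obtain ⟨p, hqp⟩ := deg_pos_iff.1 ((hg q).trans (h.deg_eq hyq).ge)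
  have hp : p ∈ exchangeEnds H F y := mem_exchangeEnds.2 ⟨q, hyq, hqp⟩
  have hwt := h.weight_le_of_mem_exchangeEnds hp
  have hle := hM p fun hpy => notMem_exchangeEnds_self (hpy ▸ hp)
  omega

end IsOptimal

/-! ### Factors with nearly constant degrees -/

lemma IsOptimal.card_freeNeighbors_le {H F : SimpleGraph V} {g wt : V → ℕ} {y z u v : V} {a : ℕ}
    (h : IsOptimal H g wt F y z) (ha : 2 ≤ a) (hle : g ≤ Function.const V a)
    (hge : Function.const V a ≤ g + Pi.single u 1 + Pi.single v 1) :
    #(freeNeighbors H F y) + (if z ∈ exchangeEnds H F y then 1 else 0) ≤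
      #(exchangeEnds H F y) + 1 := by
  have hsingle (A : Finset V) (x : V) : ∑ q ∈ A, (Pi.single x 1 : V → ℕ) q ≤ 1 := by
    rw [sum_pi_single']
    split_ifs <;> decide
  have hA (A : Finset V) : #A * a ≤ ∑ q ∈ A, g q + 2 := by
    have hsum := card_nsmul_le_sum A _ a fun q _ => hge q
    simp only [Pi.add_apply, sum_add_distrib, smul_eq_mul] at hsum
    have hu := hsingle A u
    have hv := hsingle A v
    omega
  have hP := sum_le_card_nsmul (exchangeEnds H F y) g a fun p _ => hle p
  have hsum := h.sum_freeNeighbors_le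
  have hA := hA (freeNeighbors H F y)
  rw [smul_eq_mul] at hP
  by_contra! hlt
  split_ifs at hlt hsum <;> nlinarith

/-- Here `N` is the number of vertices less the prescribed degree, while `D` and `D'` are the
numbers of missing edges at the two deficient vertices: `D` is so close to `N / 2` that
`D * (N - D)` exceeds twice the total number of missing edges. -/
lemma weight_bounds_false {a N D D' ε : ℕ} (ha : 2 ≤ a) (hN : 2 * a + 4 ≤ N) (hε : ε ≤ 1)
    (haε : ε = 1 → 3 ≤ a) (hD' : D' ≤ D) (hlow : N + 1 ≤ a + D + D') (hup : 2 * D ≤ N + 1 + ε)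
    (hsum : D * (N - D) + D' ≤ 2 * N + ε) : False := by
  obtain ⟨k, rfl⟩ : ∃ k, N = D + k := ⟨N - D, by omega⟩
  rw [Nat.add_sub_cancel_left] at hsum
  zify at *
  have hquarter : (0 : ℤ) ≤ 4 * D - (D + k) - 6 := by omega
  have hhalf : (0 : ℤ) ≤ D + k + 1 + ε - 2 * D := by omega
  have hconcave := mul_nonneg hquarter hhalf
  obtain rfl | rfl : ε = 0 ∨ ε = 1 := by omega
  · push_cast at *
    nlinarith
  · have := haε rfl
    push_cast at *
    nlinarith

lemma exists_factor_sdiff_edge {G : SimpleGraph V} {g : V → ℕ} {a ε : ℕ} {u v : V} (ha : 2 ≤ a)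
    (hcard : 3 * a + 4 ≤ Fintype.card V) (hmiss : edgeCount Gᶜ + a ≤ Fintype.card V)
    (huv : G.Adj u v) (hε : ε ≤ 1) (hdeg : ∀ w, a + (if w = u then ε else 0) ≤ deg G w)
    (hpar : Even (Fintype.card V * a + ε))
    (hg : g + Pi.single u 1 + Pi.single v 1 = Function.const V a + Pi.single u ε) :
    ∃ F ≤ G \ edge u v, deg F = g := by
  by_contra hno
  have hg_apply (w : V) : g w + (if w = u then 1 else 0) + (if w = v then 1 else 0) =
      a + if w = u then ε else 0 := by
    simpa only [Pi.add_apply, Pi.single_apply, Function.const_apply] using congrFun hg w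
  have hgsum : ∑ w, g w + 1 + 1 = Fintype.card V * a + ε := by
    simpa [sum_add_distrib] using Fintype.sum_congr _ _ hg_apply
  have hne := huv.ne
  -- Counting one more missing edge at `u` when `ε = 1` makes `hdeg_sdiff` hold at every vertex: the
  -- slack `deg (G \ edge u v) w - g w` depends on `w` only through its weight.
  obtain ⟨wt, hwt⟩ : ∃ wt : V → ℕ, ∀ w, wt w = deg Gᶜ w + if w = u then ε else 0 :=
    ⟨_, fun _ => rfl⟩
  have hwtsum : ∑ w, wt w = 2 * edgeCount Gᶜ + ε := by
    simp [hwt, sum_add_distrib, sum_deg]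
  have hdeg_sdiff (w : V) : deg (G \ edge u v) w + wt w + a + 1 = Fintype.card V + g w := by
    have hedge := congrFun (deg_sdiff_edge huv) w
    have hcompl := deg_add_deg_compl G w
    have hgw := hg_apply w
    have hwtw := hwt w
    simp only [Pi.add_apply, Pi.single_apply] at hedge
    omega
  obtain ⟨F, y, z, h, hzy⟩ := exists_isOptimal wt (by grind) hno
  have hAP := h.card_freeNeighbors_le (a := a) (u := u) (v := v) ha
    (fun w => by have := hg_apply w; rw [Function.const_apply]; grind) (hg ▸ le_self_add)
  have hy := hdeg_sdiff y
  have hz := hdeg_sdiff z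
  have hydeg := hdeg y
  have hwty := hwt y
  have hycompl := deg_add_deg_compl G y
  have hup := h.two_mul_weight_le (M := edgeCount Gᶜ + 1 + ε) (fun w => by grind) (by omega)
    fun w hw => by have := deg_add_deg_le Gᶜ hw.symm; grind
  have hlow := h.deg_add_deg_add_four_le hAP
  have hsum := h.weight_mul_add_weight_le_sum (k := Fintype.card V - a - wt y) hzy hAP (by omega)
  have haε : ε = 1 → 3 ≤ a := by
    rintro rfl
    by_contra ha3
    obtain rfl : a = 2 := by omega
    grind
  exact weight_bounds_false (N := Fintype.card V - a) ha (by omega) hε haε hzy (by omega) (by omega)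
    (by omega)

theorem exists_factor_through {G : SimpleGraph V} {a ε : ℕ} {u v : V} (ha : 2 ≤ a)
    (hcard : 3 * a + 4 ≤ Fintype.card V) (hmiss : edgeCount Gᶜ + a ≤ Fintype.card V)
    (huv : G.Adj u v) (hε : ε ≤ 1) (hdeg : ∀ w, a + (if w = u then ε else 0) ≤ deg G w)
    (hpar : Even (Fintype.card V * a + ε)) :
    ∃ F ≤ G, F.Adj u v ∧ ∀ w, deg F w = a + if w = u then ε else 0 := by
  have hne := huv.ne
  obtain ⟨g, hg⟩ : ∃ g : V → ℕ,
      g + Pi.single u 1 + Pi.single v 1 = Function.const V a + Pi.single u ε := by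
    refine ⟨Function.const V a + Pi.single u ε - (Pi.single u 1 + Pi.single v 1), ?_⟩
    rw [add_assoc]
    refine tsub_add_cancel_of_le fun w => ?_
    simp only [Pi.add_apply, Pi.single_apply, Function.const_apply]
    grind
  obtain ⟨F, hF, hFg⟩ := exists_factor_sdiff_edge ha hcard hmiss huv hε hdeg hpar hg
  have hFuv : ¬F.Adj u v := fun h => by simpa [edge_adj, hne] using hF h
  refine ⟨F ⊔ edge u v, sup_le (hF.trans sdiff_le) ((edge_le_iff _).2 (.inr huv)),
    .inr ((edge_adj ..).2 ⟨.inl ⟨rfl, rfl⟩, hne⟩), fun w => ?_⟩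
  rw [deg_sup_edge hne hFuv, hFg, hg, Pi.add_apply, Pi.single_apply, Function.const_apply]

/-! ### Matchings -/

theorem exists_one_factor {G : SimpleGraph V} (hpar : Even (Fintype.card V))
    (hdeg : ∀ w, 1 ≤ deg G w) (hmiss : edgeCount Gᶜ < Fintype.card V)
    (hcard : 6 ≤ Fintype.card V ∨ edgeCount Gᶜ + 2 ≤ Fintype.card V) : ∃ F ≤ G, deg F = 1 := by
  by_contra hno
  obtain ⟨F, y, z, h, hzy⟩ := exists_isOptimal (deg Gᶜ) (by simpa using hpar) hno
  have hAP : #(freeNeighbors G F y) + (if z ∈ exchangeEnds G F y then 1 else 0) ≤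
      #(exchangeEnds G F y) + 0 := by
    simpa using h.sum_freeNeighbors_le
  have hy := deg_add_deg_compl G y
  have hz := deg_add_deg_compl G z
  have hlow := h.deg_add_deg_add_four_le hAP
  have hup := h.two_mul_weight_le (fun _ => le_rfl) (hdeg y) fun w hw => deg_add_deg_le Gᶜ hw.symm
  have hsum := h.weight_mul_add_weight_le_sum (k := Fintype.card V - deg Gᶜ y) hzy hAP
    (by simp only [Pi.one_apply]; omega)
  obtain ⟨k, hk⟩ := hpar
  simp only [Pi.one_apply] at hlow
  obtain ⟨hDy, hDz⟩ : deg Gᶜ y = k ∧ deg Gᶜ z = k := by omega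
  rw [hDy, hDz, sum_deg, hk, Nat.add_sub_cancel] at hsum
  obtain hlarge | hfew := hcard <;> nlinarith

lemma edgeCount_compl_induce_add_deg_le (G : SimpleGraph V) {S : Set V} {x : V} (hx : x ∉ S) :
    edgeCount (G.induce S)ᶜ + deg Gᶜ x ≤ edgeCount Gᶜ := by
  have hcompl : (G.induce S)ᶜ = Gᶜ.induce S := by
    ext
    simp [Subtype.ext_iff]
  rw [hcompl, ← induce_deleteIncidenceSet_of_notMem _ hx,
    ← edgeCount_deleteIncidenceSet_add Gᶜ x]
  refine Nat.add_le_add_right ?_ _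
  exact Nat.card_le_card_of_injective _ (Embedding.mapEdgeSet (Embedding.induce S)).injective

lemma exists_matching_on {G : SimpleGraph V} {S : Set V} (hpar : Even S.ncard)
    (hdeg : ∀ w, 1 ≤ deg (G.induce S) w) (hmiss : edgeCount (G.induce S)ᶜ < S.ncard)
    (hcard : 6 ≤ S.ncard ∨ edgeCount (G.induce S)ᶜ + 2 ≤ S.ncard) :
    ∃ M ≤ G, ∀ w, deg M w = if w ∈ S then 1 else 0 := by
  rw [← Nat.card_coe_set_eq, Nat.card_eq_fintype_card] at hpar hmiss hcard
  obtain ⟨F, hF, hF1⟩ := exists_one_factor hpar hdeg hmiss hcard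
  refine ⟨F.spanningCoe, (map_monotone _ hF).trans (G.spanningCoe_induce_le S), fun w => ?_⟩
  split_ifs with hw
  · calc deg F.spanningCoe w = deg F ⟨w, hw⟩ := by
          rw [deg, deg, ← Set.ncard_map (Function.Embedding.subtype _)]
          exact congrArg _ (F.neighborSet_map (Function.Embedding.subtype _) ⟨w, hw⟩)
      _ = 1 := congrFun hF1 _
  · refine Nat.eq_zero_of_not_pos fun hpos => ?_
    obtain ⟨x, hx⟩ := deg_pos_iff.1 hpos
    obtain ⟨w', -, -, rfl, -⟩ := (map_adj ..).1 hx
    exact hw w'.2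

lemma hasABFactorThrough_of_sup {G M J : SimpleGraph V} {b : ℕ} {u v : V} (hM : M ≤ G) (hJ : J ≤ G)
    (huv : J.Adj u v) (hpos : ∀ w, 1 ≤ deg M w + deg J w) (hle : ∀ w, deg M w + deg J w ≤ b) :
    HasABFactorThrough G 1 b u v := by
  refine ⟨M ⊔ J, sup_le hM hJ, .inr huv, fun w => ⟨?_, (deg_sup_le M J w).trans (hle w)⟩⟩
  have h₁ : deg M w ≤ deg (M ⊔ J) w := deg_mono le_sup_left w
  have h₂ : deg J w ≤ deg (M ⊔ J) w := deg_mono le_sup_right w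
  have := hpos w
  change 1 ≤ deg (M ⊔ J) w
  omega

lemma exists_matching_off_vertex {G : SimpleGraph V} (hcard : 7 ≤ Fintype.card V)
    (hmiss : edgeCount Gᶜ + 1 ≤ Fintype.card V)
    (hodd : ¬Even (Fintype.card V)) {x : V} (hx : ∀ w, deg Gᶜ w ≤ deg Gᶜ x) :
    ∃ M ≤ G, ∀ w, deg M w = if w = x then 0 else 1 := by
  obtain ⟨S, hS⟩ : ∃ S : Set V, S = {x}ᶜ := ⟨_, rfl⟩
  have hScard : S.ncard + 1 = Fintype.card V := by
    rw [hS, ← Nat.card_eq_fintype_card, ← Set.ncard_add_ncard_compl {x}, Set.ncard_singleton,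
      add_comm]
  have hdel := edgeCount_compl_induce_add_deg_le G (S := S) (x := x) (by simp [hS])
  have hnbr (w : V) (hw : w ≠ x) : ∃ w', w' ≠ x ∧ G.Adj w w' := by
    by_contra! hleaf
    have hw1 : deg G w ≤ 1 := by
      rw [← Set.ncard_singleton x]
      exact Set.ncard_le_ncard fun w' hw' => by_contra fun hne => hleaf w' hne hw'
    have hcompl := deg_add_deg_compl G w
    have hle := hx w
    have hsum := deg_add_deg_le Gᶜ hw
    omega
  have hlt : edgeCount (G.induce S)ᶜ < S.ncard := by
    obtain h0 | hpos := Nat.eq_zero_or_pos (deg Gᶜ x)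
    · have hsum := sum_deg Gᶜ
      rw [sum_eq_zero fun w _ => Nat.le_zero.1 (h0 ▸ hx w)] at hsum
      omega
    · omega
  have hdegS (w : S) : 1 ≤ deg (G.induce S) w := by
    obtain ⟨w', hw', hadj⟩ := hnbr w (by simpa [hS] using w.2)
    exact deg_pos_iff.2 ⟨⟨w', by simpa [hS] using hw'⟩, hadj⟩
  obtain ⟨M, hM, hMdeg⟩ := exists_matching_on (by grind) hdegS hlt (.inl (by omega))
  exact ⟨M, hM, fun w => by simpa [hS, ite_not] using hMdeg w⟩

lemma exists_matching_off_pendant {G : SimpleGraph V} (hcard : 7 ≤ Fintype.card V)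
    (hmiss : edgeCount Gᶜ + 1 ≤ Fintype.card V) (hodd : ¬Even (Fintype.card V)) {u v x : V}
    (huv : u ≠ v) (hxu : x ≠ u) (hxv : x ≠ v) (hx : ∀ w, G.Adj x w → w = u ∨ w = v) :
    ∃ M ≤ G, ∀ w, deg M w = if w = u ∨ w = v ∨ w = x then 0 else 1 := by
  obtain ⟨S, hS⟩ : ∃ S : Set V, S = {u, v, x}ᶜ := ⟨_, rfl⟩
  have hScard : S.ncard + 3 = Fintype.card V := by
    rw [hS, ← Nat.card_eq_fintype_card, ← Set.ncard_add_ncard_compl {u, v, x}, add_comm,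
      Set.ncard_eq_three.2 ⟨u, v, x, huv, hxu.symm, hxv.symm, rfl⟩]
  have hdegx : deg G x ≤ 2 := by
    rw [← Set.ncard_pair huv]
    exact Set.ncard_le_ncard hx
  have hcompl := deg_add_deg_compl G x
  have hdel := edgeCount_compl_induce_add_deg_le G (S := S) (x := x) (by simp [hS])
  have hdegS (w : S) : 1 ≤ deg (G.induce S) w := by
    have hw := deg_add_deg_compl (G.induce S) w
    have hle := deg_le_edgeCount (G.induce S)ᶜ w
    rw [← Nat.card_eq_fintype_card, Nat.card_coe_set_eq] at hw
    omega
  obtain ⟨M, hM, hMdeg⟩ := exists_matching_on (by grind) hdegS (by omega) (.inr (by omega))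
  refine ⟨M, hM, fun w => (hMdeg w).trans ?_⟩
  simp only [hS, Set.mem_compl_iff, Set.mem_insert_iff, Set.mem_singleton_iff, ite_not]

theorem hasABFactorThrough_one_two {G : SimpleGraph V} {u v : V} (hcard : 7 ≤ Fintype.card V)
    (hmiss : edgeCount Gᶜ + 1 ≤ Fintype.card V) (hdeg : ∀ w, 1 ≤ deg G w) (huv : G.Adj u v) :
    HasABFactorThrough G 1 2 u v := by
  have hedge : (edge u v).Adj u v := (edge_adj ..).2 ⟨.inl ⟨rfl, rfl⟩, huv.ne⟩
  have hle : edge u v ≤ G := (edge_le_iff _).2 (.inr huv)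
  by_cases hpar : Even (Fintype.card V)
  · obtain ⟨M, hM, hM1⟩ := exists_one_factor hpar hdeg hmiss (.inl (by omega))
    refine hasABFactorThrough_of_sup hM hle hedge ?_ ?_ <;> intro w <;>
      simp only [hM1, deg_edge huv.ne, Pi.add_apply, Pi.one_apply, Pi.single_apply] <;>
      grind [huv.ne]
  have : Nonempty V := ⟨u⟩
  obtain ⟨x, -, hx⟩ := exists_max_image univ (deg Gᶜ) univ_nonempty
  obtain ⟨M, hM, hMdeg⟩ := exists_matching_off_vertex hcard hmiss hpar fun w => hx w (mem_univ w)
  have huv' := huv.ne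
  by_cases hxuv : x = u ∨ x = v
  · refine hasABFactorThrough_of_sup hM hle hedge ?_ ?_ <;> intro w <;>
      simp only [hMdeg, deg_edge huv.ne, Pi.add_apply, Pi.single_apply] <;> grind
  rw [not_or] at hxuv
  by_cases hw : ∃ w, G.Adj x w ∧ w ≠ u ∧ w ≠ v
  · obtain ⟨w, hxw, hwu, hwv⟩ := hw
    have := hxw.ne
    refine hasABFactorThrough_of_sup hM (edge_sup_edge_le huv hxw) (.inl hedge) ?_ ?_ <;>
      intro t <;>
      simp only [hMdeg, deg_edge_sup_edge huv.ne hxuv.1 hxuv.2 hxw.ne, Pi.add_apply,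
        Pi.single_apply] <;>
      grind
  · push Not at hw
    obtain ⟨w, hxw⟩ := deg_pos_iff.1 (hdeg x)
    have hw' : w = u ∨ w = v := by grind
    have := hxw.ne
    obtain ⟨M, hM, hMdeg⟩ := exists_matching_off_pendant hcard hmiss hpar huv.ne hxuv.1 hxuv.2
      fun w hw => by grind
    refine hasABFactorThrough_of_sup hM (edge_sup_edge_le huv hxw) (.inl hedge) ?_ ?_ <;>
      intro t <;>
      simp only [hMdeg, deg_edge_sup_edge huv.ne hxuv.1 hxuv.2 hxw.ne, Pi.add_apply,
        Pi.single_apply] <;>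
      grind

/-! ### Covering all edges -/

lemma hasABFactorThrough_of_le_deg {G : SimpleGraph V} {a b : ℕ} {u v : V} (ha : 2 ≤ a)
    (hab : a < b) (hcard : 3 * a + 4 ≤ Fintype.card V)
    (hmiss : edgeCount Gᶜ + a ≤ Fintype.card V) (hdeg : ∀ w, a ≤ deg G w) (huv : G.Adj u v)
    (hu : a + 1 ≤ deg G u) (hodd : ¬Even (Fintype.card V * a)) :
    HasABFactorThrough G a b u v := by
  obtain ⟨F, hF, huvF, hFdeg⟩ := exists_factor_through (ε := 1) ha hcard hmiss huv le_rfl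
    (by grind) (by grind)
  refine ⟨F, hF, huvF, fun w => ?_⟩
  change a ≤ deg F w ∧ deg F w ≤ b
  rw [hFdeg]
  split_ifs <;> omega

theorem isABCovered_of_edgeCount_compl_add_le {G : SimpleGraph V} {a b : ℕ} (ha : 1 ≤ a)
    (hab : a ≤ b) (hb : 2 ≤ b) (hcard : 3 * a + 4 ≤ Fintype.card V)
    (hpar : a = b → Even (Fintype.card V * a)) (hmiss : edgeCount Gᶜ + a ≤ Fintype.card V)
    (hdeg : ∀ w, a ≤ deg G w) : IsABCovered G a b := by
  intro u v huv
  obtain rfl | ha2 := ha.eq_or_lt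
  · obtain ⟨F, hF, huvF, hFdeg⟩ := hasABFactorThrough_one_two hcard hmiss hdeg huv
    exact ⟨F, hF, huvF, fun w => ⟨(hFdeg w).1, (hFdeg w).2.trans hb⟩⟩
  by_cases heven : Even (Fintype.card V * a)
  · obtain ⟨F, hF, huvF, hFdeg⟩ := exists_factor_through (ε := 0) ha2 hcard hmiss huv zero_le_one
      (by simpa using hdeg) heven
    simp only [ite_self, add_zero] at hFdeg
    exact ⟨F, hF, huvF, fun w => ⟨(hFdeg w).ge, (hFdeg w).trans_le hab⟩⟩
  have hlt : a < b := hab.lt_of_ne (mt hpar heven)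
  have hends : a + 1 ≤ deg G u ∨ a + 1 ≤ deg G v := by
    have hu := deg_add_deg_compl G u
    have hv := deg_add_deg_compl G v
    have hsum := deg_add_deg_le Gᶜ huv.ne
    omega
  obtain hu | hv := hends
  · exact hasABFactorThrough_of_le_deg ha2 hlt hcard hmiss hdeg huv hu heven
  · obtain ⟨F, hF, hvuF, hFdeg⟩ :=
      hasABFactorThrough_of_le_deg ha2 hlt hcard hmiss hdeg huv.symm hv heven
    exact ⟨F, hF, hvuF.symm, hFdeg⟩

/-! ### Graphs complete off one vertex -/

lemma isClique_compl_singleton_iff {G : SimpleGraph V} {x : V} :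
    G.IsClique {x}ᶜ ↔ edgeCount Gᶜ = deg Gᶜ x := by
  rw [← edgeCount_deleteIncidenceSet_add, Nat.add_eq_right, edgeCount, Nat.card_coe_set_eq,
    Set.ncard_eq_zero, edgeSet_eq_empty]
  simp only [eq_bot_iff_forall_not_adj, deleteIncidenceSet_adj, compl_adj, isClique_iff,
    Set.Pairwise, Set.mem_compl_singleton_iff]
  grind

lemma exists_equiv_mem_iff {W : Type*} [Fintype W] {s : Set V} {t : Set W}
    (hcard : Fintype.card V = Fintype.card W) (hst : s.ncard = t.ncard) :
    ∃ e : V ≃ W, ∀ w, e w ∈ t ↔ w ∈ s := by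
  have hcompl : sᶜ.ncard = tᶜ.ncard := by
    have hs := Set.ncard_add_ncard_compl s
    have ht := Set.ncard_add_ncard_compl t
    rw [Nat.card_eq_fintype_card] at hs ht
    omega
  obtain ⟨i⟩ := (Finite.card_eq (α := s) (β := t)).1 hst
  obtain ⟨j⟩ := (Finite.card_eq (α := (sᶜ : Set V)) (β := (tᶜ : Set W))).1 hcompl
  refine ⟨(Equiv.Set.sumCompl s).symm.trans ((i.sumCongr j).trans (Equiv.Set.sumCompl t)),
    fun w => ?_⟩
  by_cases hw : w ∈ s
  · simp [Equiv.Set.sumCompl_symm_apply_of_mem hw, hw]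
  · have hj : (j ⟨w, hw⟩ : W) ∉ t := (j ⟨w, hw⟩).2
    simp [Equiv.Set.sumCompl_symm_apply_of_notMem hw, hw, hj]

lemma exists_pointed_equiv_mem_iff {W : Type*} [Fintype W] {s : Set V} {t : Set W}
    {x : V} {y : W} (hcard : Fintype.card V = Fintype.card W) (hst : s.ncard = t.ncard)
    (hx : x ∉ s) (hy : y ∉ t) : ∃ e : V ≃ W, e x = y ∧ ∀ w, e w ∈ t ↔ w ∈ s := by
  obtain ⟨e, he⟩ := exists_equiv_mem_iff hcard hst
  refine ⟨e.trans (Equiv.swap (e x) y), Equiv.swap_apply_left _ _, fun w => ?_⟩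
  rw [← he w, Equiv.trans_apply]
  have : e x ∉ t := mt (he x).1 hx
  rw [Equiv.swap_apply_def]
  split_ifs <;> simp_all

omit [Fintype V] in
lemma adj_iff_of_isClique_compl_singleton {G : SimpleGraph V} {x : V} (hG : G.IsClique {x}ᶜ)
    {w z : V} :
    G.Adj w z ↔ w ≠ z ∧ (w = x → z ∈ G.neighborSet x) ∧ (z = x → w ∈ G.neighborSet x) := by
  refine ⟨fun h => ⟨h.ne, fun hw => hw ▸ h, fun hz => hz ▸ h.symm⟩, fun ⟨hne, hw, hz⟩ => ?_⟩
  by_cases hwx : w = x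
  · exact hwx ▸ hw hwx
  by_cases hzx : z = x
  · exact hzx ▸ (hz hzx).symm
  exact hG hwx hzx hne

lemma nonempty_iso_of_isClique_compl_singleton {W : Type*} [Fintype W]
    {G : SimpleGraph V} {H : SimpleGraph W} {x : V} {y : W}
    (hcard : Fintype.card V = Fintype.card W) (hG : G.IsClique {x}ᶜ) (hH : H.IsClique {y}ᶜ)
    (hdeg : deg G x = deg H y) : Nonempty (G ≃g H) := by
  obtain ⟨e, rfl, he⟩ := exists_pointed_equiv_mem_iff hcard hdeg (G.notMem_neighborSet_self)
    (H.notMem_neighborSet_self)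
  refine ⟨⟨e, fun {w z} => ?_⟩⟩
  rw [adj_iff_of_isClique_compl_singleton hG, adj_iff_of_isClique_compl_singleton hH]
  simp only [ne_eq, e.injective.eq_iff, he]

lemma Hgraph_isClique_compl_singleton_zero {n a : ℕ} (hn : 0 < n) :
    (Hgraph n a).IsClique {⟨0, hn⟩}ᶜ := by
  intro w hw z hz hwz
  rw [Set.mem_compl_singleton_iff, ne_eq, Fin.ext_iff] at hw hz
  exact (fromRel_adj ..).2 ⟨hwz, .inl (.inl ⟨Nat.pos_of_ne_zero hw, Nat.pos_of_ne_zero hz⟩)⟩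

lemma deg_Hgraph_zero {n a : ℕ} (hn : 0 < n) (han : a < n) :
    deg (Hgraph n a) ⟨0, hn⟩ = a - 1 := by
  have hnbr : (Hgraph n a).neighborSet ⟨0, hn⟩ = (Ioo ⟨0, hn⟩ ⟨a, han⟩ : Finset (Fin n)) := by
    ext i
    rw [mem_neighborSet, Hgraph, fromRel_adj, coe_Ioo, Set.mem_Ioo, Fin.lt_def, Fin.lt_def, ne_eq,
      Fin.ext_iff]
    dsimp only
    omega
  rw [deg, hnbr, Set.ncard_coe_finset, Fin.card_Ioo, Nat.sub_zero]

lemma edgeCount_Hgraph {n a : ℕ} (ha : 1 ≤ a) (han : a < n) :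
    edgeCount (Hgraph n a) = (n - 1).choose 2 + (a - 1) := by
  have hn : 0 < n := by omega
  have hcompl := deg_add_deg_compl (Hgraph n a) ⟨0, hn⟩
  rw [deg_Hgraph_zero hn han, Fintype.card_fin,
    ← isClique_compl_singleton_iff.1 (Hgraph_isClique_compl_singleton_zero hn)] at hcompl
  have hcount := edgeCount_add_edgeCount_compl_add_one (Hgraph n a) (by simpa using hn)
  rw [Fintype.card_fin] at hcount
  omega

lemma edgeCount_congr {W : Type*} [Fintype W] {G : SimpleGraph V} {H : SimpleGraph W}
    (e : G ≃g H) : edgeCount G = edgeCount H :=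
  Nat.card_congr e.mapEdgeSet

lemma nonempty_iso_Hgraph_of_deg_lt {G : SimpleGraph V} {a : ℕ} {x : V}
    (hcard : a < Fintype.card V) (hx : deg G x < a) (hmiss : edgeCount Gᶜ + a ≤ Fintype.card V) :
    Nonempty (G ≃g Hgraph (Fintype.card V) a) := by
  have hcompl := deg_add_deg_compl G x
  have hle := deg_le_edgeCount Gᶜ x
  have hpos : 0 < Fintype.card V := by omega
  have hclique : G.IsClique {x}ᶜ := isClique_compl_singleton_iff.2 (by omega)
  refine nonempty_iso_of_isClique_compl_singleton (Fintype.card_fin _).symm hclique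
    (Hgraph_isClique_compl_singleton_zero hpos) ?_
  rw [deg_Hgraph_zero hpos hcard]
  omega

lemma nonempty_iso_Hgraph_of_not_isABCovered {G : SimpleGraph V} {a b : ℕ} (ha : 1 ≤ a)
    (hab : a ≤ b) (hb : 2 ≤ b) (hcard : 3 * a + 4 ≤ Fintype.card V)
    (hpar : a = b → Even (Fintype.card V * a)) (h : ¬IsABCovered G a b)
    (hmiss : edgeCount Gᶜ + a ≤ Fintype.card V) : Nonempty (G ≃g Hgraph (Fintype.card V) a) := by
  obtain ⟨x, hx⟩ : ∃ x, deg G x < a := by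
    by_contra! hdeg
    exact h (isABCovered_of_edgeCount_compl_add_le ha hab hb hcard hpar hmiss hdeg)
  exact nonempty_iso_Hgraph_of_deg_lt (by omega) hx hmiss

end ABFactor

open ABFactor in
theorem size_extremal_non_abCovered_general {V : Type*} [Fintype V] {n a b : ℕ}
    (hV : Fintype.card V = n) (ha : 1 ≤ a) (hab : a ≤ b) (hb : 2 ≤ b) (hn : 3 * a + 4 ≤ n)
    (hpar : a = b → Even (n * a)) (G : SimpleGraph V) (h : ¬IsABCovered G a b) :
    edgeCount G ≤ (n - 1).choose 2 + (a - 1) ∧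
      (edgeCount G = (n - 1).choose 2 + (a - 1) ↔ Nonempty (G ≃g Hgraph n a)) := by
  subst hV
  have hcount := edgeCount_add_edgeCount_compl_add_one G (by omega)
  have hiso (e : G ≃g Hgraph (Fintype.card V) a) :
      edgeCount G = (Fintype.card V - 1).choose 2 + (a - 1) :=
    (edgeCount_congr e).trans (edgeCount_Hgraph ha (by omega))
  have hextremal := nonempty_iso_Hgraph_of_not_isABCovered ha hab hb hn hpar h
  refine ⟨?_, fun heq => hextremal (by omega), fun ⟨e⟩ => hiso e⟩
  by_cases hmiss : edgeCount Gᶜ + a ≤ Fintype.card V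
  · exact (hiso (hextremal hmiss).some).le
  · omega

/-- For 1 ≤ a ≤ b, b ≥ 2, n ≥ 3a+4 (na even when a = b): any n-vertex graph that is
not [a,b]-covered has at most C(n-1,2) + a - 1 edges, with equality iff G ≅ H_{n,a}. -/
theorem size_extremal_non_abCovered {n a b : ℕ} (ha : 1 ≤ a) (hab : a ≤ b)
    (hb : 2 ≤ b) (hn : 3 * a + 4 ≤ n) (hpar : a = b → Even (n * a))
    (G : SimpleGraph (Fin n)) (h : ¬ IsABCovered G a b) :
    edgeCount G ≤ (n - 1).choose 2 + (a - 1) ∧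
      (edgeCount G = (n - 1).choose 2 + (a - 1) ↔ Nonempty (G ≃g Hgraph n a)) :=
  size_extremal_non_abCovered_general (Fintype.card_fin n) ha hab hb hn hpar G h
end

section
/- Let 1 ≤ a ≤ b with b ≥ 2, and let G be a graph of order n with δ(G) ≥ a, n ≥ 3a + 4, and na even if a = b. If the complement of G has at most n - ⌈a/2⌉ - 1 edges, then G is [a,b]-covered; that is, every edge of G is contained in some spanning subgraph F with a ≤ d_F(v) ≤ b for all vertices v. -/
open SimpleGraph Finset
open scoped Classical

/-!
Given an edge `uv` of `G`, put `K = G - uv` and `f z = a - [z = u] - [z = v]`. It suffices to find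
a subgraph of `K` whose degrees lie between `f` and `f + b - a`: adding `uv` gives the factor.

Take a maximum `f`-matching `F` of `K` and suppose that it misses two units of degree, at `x` and
`y`. Let `R` be the set of neighbours of `x` in `K - F` and `S` the set of `F`-neighbours of `R`.
Every vertex of `R` is saturated, so counting the `F`-edges at `R` makes `S` about as large as `R`.
Exchanging `rs` for `xr` moves the missing unit from `x` to `s ∈ S`. If `F`, `x`, `y` are chosen
with the sum of the degrees of `x` and `y` in the complement of `K` minimal, every vertex of `S`
hence has at least the degree of `x` there. When `a ≥ 2` the larger of the two degrees is at least
`4`, and taking it at `x`, the set `S ∪ {x}` forces more non-edges than there are.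

So at most one unit is missing. That is impossible when `a = b`, where `na` is even, and when
`a < b` one further edge repairs it. When `a = 1` three missing units would already force too many
non-edges, and two are repaired by one new edge at each of `x` and `y`, with distinct other ends.
-/

section Degree

variable {V : Type*} {F K : SimpleGraph V} {r s x y : V}

lemma sdiff_edge_sup_edge (h : F.Adj x y) : F \ edge x y ⊔ edge x y = F :=
  sdiff_sup_cancel (by simp [h])

lemma degree_sup_edge (hxy : x ≠ y) (h : ¬F.Adj x y) (z : V) [Fintype (F.neighborSet z)]
    [Fintype ((F ⊔ edge x y).neighborSet z)] :
    (F ⊔ edge x y).degree z =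
      F.degree z + (if z = x then 1 else 0) + (if z = y then 1 else 0) := by
  have hN : (F ⊔ edge x y).neighborFinset z =
      F.neighborFinset z ∪ ((if z = x then {y} else ∅) ∪ if z = y then {x} else ∅) := by
    ext w
    simp only [mem_neighborFinset, sup_adj, edge_adj]
    grind [mem_neighborFinset]
  have hdisj : Disjoint (F.neighborFinset z)
      ((if z = x then {y} else ∅) ∪ if z = y then {x} else ∅) := by
    rw [Finset.disjoint_left]
    grind [mem_neighborFinset, F.adj_comm x y]
  rw [← card_neighborFinset_eq_degree, hN, card_union_of_disjoint hdisj,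
    card_neighborFinset_eq_degree, add_assoc]
  split_ifs <;> grind

lemma degree_sdiff_edge (h : F.Adj x y) (z : V) [Fintype (F.neighborSet z)]
    [Fintype ((F \ edge x y).neighborSet z)] :
    (F \ edge x y).degree z + (if z = x then 1 else 0) + (if z = y then 1 else 0) =
      F.degree z := by
  have : Fintype ((F \ edge x y ⊔ edge x y).neighborSet z) := by rwa [sdiff_edge_sup_edge h]
  rw [← degree_sup_edge h.ne (by simp [edge_adj, h.ne])]
  congr!
  exact sdiff_edge_sup_edge h

lemma degree_compl_sdiff_edge [Finite V] (h : F.Adj x y) (z : V) [Fintype (Fᶜ.neighborSet z)]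
    [Fintype ((F \ edge x y)ᶜ.neighborSet z)] :
    (F \ edge x y)ᶜ.degree z =
      Fᶜ.degree z + (if z = x then 1 else 0) + (if z = y then 1 else 0) := by
  have : Fintype ((Fᶜ ⊔ edge x y).neighborSet z) := Fintype.ofFinite _
  rw [← degree_sup_edge h.ne (by simp [h])]
  have hcompl : (F \ edge x y)ᶜ = Fᶜ ⊔ edge x y := by rw [sdiff_eq, compl_inf, compl_compl]
  congr!

/-- Replace the edge `rs` of `F` by the edge `xr`: the switch along the alternating path
`x, r, s`. -/
def reroute (F : SimpleGraph V) (x r s : V) : SimpleGraph V :=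
  F \ edge r s ⊔ edge x r

lemma reroute_le (hF : F ≤ K) (hxr : K.Adj x r) : reroute F x r s ≤ K :=
  sup_le (sdiff_le.trans hF) (by simp [hxr])

lemma degree_reroute [Finite V] (hxr : x ≠ r) (hnot : ¬F.Adj x r) (hrs : F.Adj r s) (z : V)
    [Fintype (F.neighborSet z)] [Fintype ((reroute F x r s).neighborSet z)] :
    (reroute F x r s).degree z + (if z = s then 1 else 0) =
      F.degree z + (if z = x then 1 else 0) := by
  have : Fintype ((F \ edge r s).neighborSet z) := Fintype.ofFinite _
  unfold reroute at *
  have hadd := degree_sup_edge hxr (F := F \ edge r s) (fun h ↦ hnot h.1) z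
  have hremove := degree_sdiff_edge hrs z
  omega

lemma degree_sdiff_add_degree (hF : F ≤ K) (z : V) [Fintype (F.neighborSet z)]
    [Fintype (K.neighborSet z)] [Fintype ((K \ F).neighborSet z)] :
    (K \ F).degree z + F.degree z = K.degree z := by
  have hsub : F.neighborFinset z ⊆ K.neighborFinset z := fun w ↦ by simpa using @hF z w
  have hN : (K \ F).neighborFinset z = K.neighborFinset z \ F.neighborFinset z := by
    ext w
    simp
  simpa only [← card_neighborFinset_eq_degree, hN] using card_sdiff_add_card_eq_card hsub

end Degree

section Counting

variable {V : Type*} [Fintype V] (H : SimpleGraph V) [DecidableRel H.Adj]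

lemma sum_card_neighborFinset_inter_comm (A B : Finset V) :
    ∑ p ∈ A, #(H.neighborFinset p ∩ B) = ∑ q ∈ B, #(H.neighborFinset q ∩ A) := by
  convert sum_card_bipartiteAbove_eq_sum_card_bipartiteBelow H.Adj (s := A) (t := B) using 4
  all_goals
    ext
    simp [bipartiteAbove, bipartiteBelow, H.adj_comm, and_comm]

lemma sum_degree_le_sum_biUnion_degree (A : Finset V) :
    ∑ p ∈ A, H.degree p ≤ ∑ q ∈ A.biUnion (H.neighborFinset ·), H.degree q := by
  calc ∑ p ∈ A, H.degree p
      = ∑ p ∈ A, #(H.neighborFinset p ∩ A.biUnion (H.neighborFinset ·)) :=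
        sum_congr rfl fun p hp ↦ by
          rw [inter_eq_left.2 (subset_biUnion_of_mem (H.neighborFinset ·) hp),
            card_neighborFinset_eq_degree]
    _ = ∑ q ∈ A.biUnion (H.neighborFinset ·), #(H.neighborFinset q ∩ A) :=
        sum_card_neighborFinset_inter_comm H _ _
    _ ≤ _ := sum_le_sum fun q _ ↦ card_le_card inter_subset_left

lemma two_mul_sum_degree_le (T : Finset V) :
    2 * ∑ z ∈ T, H.degree z ≤ ∑ z, H.degree z + #T * (#T - 1) := by
  have hinner : ∑ z ∈ T, #(H.neighborFinset z ∩ T) ≤ #T * (#T - 1) :=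
    sum_le_card_nsmul T _ _ fun z hz ↦ by
      rw [← card_erase_of_mem hz]
      exact card_le_card fun w ↦ by
        simp only [mem_inter, mem_neighborFinset, mem_erase]
        exact fun h ↦ ⟨h.1.ne', h.2⟩
  have houter : ∑ z ∈ T, #(H.neighborFinset z ∩ Tᶜ) ≤ ∑ z ∈ Tᶜ, H.degree z := by
    rw [sum_card_neighborFinset_inter_comm]
    exact sum_le_sum fun z _ ↦ card_le_card inter_subset_left
  have hsplit : ∑ z ∈ T, H.degree z =
      ∑ z ∈ T, #(H.neighborFinset z ∩ T) + ∑ z ∈ T, #(H.neighborFinset z ∩ Tᶜ) := by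
    rw [← sum_add_distrib]
    exact sum_congr rfl fun z _ ↦ by
      rw [← sdiff_eq_inter_compl, card_inter_add_card_sdiff, card_neighborFinset_eq_degree]
  have htotal := sum_add_sum_compl T fun z ↦ H.degree z
  omega

lemma two_mul_mul_le_sum_degree {T : Finset V} {d j : ℕ} (hd : ∀ z ∈ T, d ≤ H.degree z)
    (hj : j ≤ #T) : 2 * (j * d) ≤ ∑ z, H.degree z + j * (j - 1) := by
  obtain ⟨T', hT', rfl⟩ := exists_subset_card_eq hj
  calc 2 * (#T' * d) ≤ 2 * ∑ z ∈ T', H.degree z :=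
        Nat.mul_le_mul_left 2 (card_nsmul_le_sum T' _ d fun z hz ↦ hd z (hT' hz))
    _ ≤ _ := two_mul_sum_degree_le H T'

end Counting

section FMatching

variable {V : Type*} [Fintype V] {K F : SimpleGraph V} {f : V → ℕ} {r s x y : V}

/-- `F` is a subgraph of `K` with degrees bounded by `f` (a simple `f`-matching of `K`) that has
as many edges as possible; the number of edges is measured by the degree sum. -/
structure IsMaximumFMatching (K : SimpleGraph V) (f : V → ℕ) (F : SimpleGraph V) : Prop where
  le : F ≤ K
  degree_le (z : V) : F.degree z ≤ f z
  sum_degree_le (F' : SimpleGraph V) : F' ≤ K → (∀ z, F'.degree z ≤ f z) →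
    ∑ z, F'.degree z ≤ ∑ z, F.degree z

/-- Raising the degrees of `x` and `y` in `F` by one each does not violate the bound `f`. When
`x = y` the degree of `x` is raised by two. -/
def HasSlack (f : V → ℕ) (F : SimpleGraph V) (x y : V) : Prop :=
  ∀ z, F.degree z + (if z = x then 1 else 0) + (if z = y then 1 else 0) ≤ f z

/-- The vertices `s` reached from `x` by a path `x, r, s` with `xr` in `K` but not in `F` and
`rs` in `F`. -/
noncomputable def exchange (K F : SimpleGraph V) (x : V) : Finset V :=
  ((K \ F).neighborFinset x).biUnion (F.neighborFinset ·)

lemma mem_exchange : s ∈ exchange K F x ↔ ∃ r, (K \ F).Adj x r ∧ F.Adj r s := by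
  simp only [exchange, mem_biUnion, mem_neighborFinset]

lemma self_notMem_exchange : x ∉ exchange K F x := fun h ↦ by
  obtain ⟨r, hxr, hrx⟩ := mem_exchange.1 h
  exact hxr.2 hrx.symm

lemma exists_isMaximumFMatching (K : SimpleGraph V) (f : V → ℕ) :
    ∃ F, IsMaximumFMatching K f F := by
  obtain ⟨F, ⟨hle, hdeg⟩, hmax⟩ := Set.exists_max_image
    {F : SimpleGraph V | F ≤ K ∧ ∀ z, F.degree z ≤ f z} (fun F ↦ ∑ z, F.degree z)
    (Set.toFinite _) ⟨⊥, bot_le, fun z ↦ by simp⟩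
  exact ⟨F, hle, hdeg, fun F' hle' hdeg' ↦ hmax F' ⟨hle', hdeg'⟩⟩

namespace HasSlack

lemma symm (h : HasSlack f F x y) : HasSlack f F y x := fun z ↦ by
  rw [add_right_comm]
  exact h z

lemma degree_lt (h : HasSlack f F x y) : F.degree x < f x := by
  have hx := h x
  rw [if_pos rfl] at hx
  omega

lemma reroute (h : HasSlack f F x y) (hxr : (K \ F).Adj x r) (hrs : F.Adj r s) :
    HasSlack f (reroute F x r s) s y := fun z ↦ by
  have hdeg := degree_reroute hxr.ne hxr.2 hrs z
  have hz := h z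
  omega

end HasSlack

namespace IsMaximumFMatching

lemma not_adj (hF : IsMaximumFMatching K f F) (h : HasSlack f F x y) : ¬(K \ F).Adj x y := by
  intro hxy
  have hle := hF.sum_degree_le (F ⊔ edge x y) (sup_le hF.le (by simp [hxy.1])) fun z ↦ by
    rw [degree_sup_edge hxy.ne hxy.2]
    exact h z
  simp only [degree_sup_edge hxy.ne hxy.2, sum_add_distrib, sum_ite_eq', mem_univ, if_true] at hle
  omega

lemma degree_eq_of_adj (hF : IsMaximumFMatching K f F) (hx : F.degree x < f x)
    (hxr : (K \ F).Adj x r) : F.degree r = f r := by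
  by_contra hr
  refine hF.not_adj (fun z ↦ ?_) hxr
  have hne := hxr.ne
  have hz := hF.degree_le z
  have hr' := hF.degree_le r
  grind

lemma reroute (hF : IsMaximumFMatching K f F) (h : HasSlack f F x y) (hxr : (K \ F).Adj x r)
    (hrs : F.Adj r s) : IsMaximumFMatching K f (reroute F x r s) where
  le := reroute_le hF.le hxr.1
  degree_le z := by
    have hz := h.reroute hxr hrs z
    omega
  sum_degree_le F' hle hdeg := by
    have hsum := sum_congr rfl fun z (_ : z ∈ univ) ↦ degree_reroute hxr.ne hxr.2 hrs z
    simp only [sum_add_distrib, sum_ite_eq', mem_univ, if_true] at hsum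
    have hmax := hF.sum_degree_le F' hle hdeg
    omega

lemma adj_of_mem_exchange (hF : IsMaximumFMatching K f F) (h : HasSlack f F x y)
    (hs : s ∈ exchange K F x) (hsy : K.Adj s y) : F.Adj s y := by
  obtain ⟨r, hxr, hrs⟩ := mem_exchange.1 hs
  have hnot := (hF.reroute h hxr hrs).not_adj (h.reroute hxr hrs)
  have hsx : s ≠ x := fun hsx ↦ hxr.2 (hsx ▸ hrs.symm)
  by_contra hFsy
  refine hnot ⟨hsy, ?_⟩
  simp only [_root_.reroute, sup_adj, sdiff_adj, edge_adj]
  have hne := hrs.ne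
  tauto

lemma sum_add_ite_le_sum_exchange (hF : IsMaximumFMatching K f F) (h : HasSlack f F x y) :
    ∑ r ∈ (K \ F).neighborFinset x, f r + (if y ∈ exchange K F x then 1 else 0) ≤
      ∑ s ∈ exchange K F x, f s := by
  calc _ = ∑ r ∈ (K \ F).neighborFinset x, F.degree r +
        ∑ s ∈ exchange K F x, (if s = y then 1 else 0) := by
        rw [sum_ite_eq']
        congr 1
        refine sum_congr rfl fun r hr ↦ (hF.degree_eq_of_adj h.degree_lt ?_).symm
        rwa [← mem_neighborFinset]
    _ ≤ ∑ s ∈ exchange K F x, F.degree s + ∑ s ∈ exchange K F x, (if s = y then 1 else 0) :=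
        Nat.add_le_add_right (sum_degree_le_sum_biUnion_degree F _) _
    _ ≤ ∑ s ∈ exchange K F x, f s := by
        rw [← sum_add_distrib]
        refine sum_le_sum fun s _ ↦ ?_
        have hs := h s
        omega

lemma card_exchange_erase_add_two_le (hF : IsMaximumFMatching K f F) (h : HasSlack f F x y) :
    #((exchange K F x).erase y) + 2 ≤ f y + Kᶜ.degree y := by
  have hsub : (exchange K F x).erase y ⊆
      (F.neighborFinset y ∪ Kᶜ.neighborFinset y).erase x := fun s hs ↦ by
    obtain ⟨hsy, hs⟩ := mem_erase.1 hs
    simp only [mem_erase, mem_union, mem_neighborFinset, compl_adj]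
    refine ⟨fun hsx ↦ self_notMem_exchange (hsx ▸ hs), ?_⟩
    by_cases hadj : K.Adj s y
    · exact Or.inl (hF.adj_of_mem_exchange h hs hadj).symm
    · exact Or.inr ⟨hsy.symm, fun hys ↦ hadj hys.symm⟩
  have hcard := card_le_card hsub
  have hunion := card_union_le (F.neighborFinset y) (Kᶜ.neighborFinset y)
  rw [card_neighborFinset_eq_degree, card_neighborFinset_eq_degree] at hunion
  have hy := h y
  rw [if_pos rfl] at hy
  by_cases hyx : y = x
  · rw [if_pos hyx] at hy
    have herase := card_erase_le (s := F.neighborFinset y ∪ Kᶜ.neighborFinset y) (a := x)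
    omega
  · have hx : x ∈ F.neighborFinset y ∪ Kᶜ.neighborFinset y := by
      simp only [mem_union, mem_neighborFinset, compl_adj]
      have hnot := hF.not_adj h.symm
      rw [sdiff_adj] at hnot
      tauto
    have herase := card_erase_add_one hx
    omega

end IsMaximumFMatching

/-- Among all maximum `f`-matchings with slack at a pair of vertices, `F` and the pair `x`, `y`
have the smallest sum of the two degrees in the complement of `K`. -/
structure IsExtremalSlack (K : SimpleGraph V) (f : V → ℕ) (F : SimpleGraph V) (x y : V) : Prop
    extends IsMaximumFMatching K f F where
  hasSlack : HasSlack f F x y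
  degree_compl_add_le {F' : SimpleGraph V} {x' y' : V} : IsMaximumFMatching K f F' →
    HasSlack f F' x' y' → Kᶜ.degree x + Kᶜ.degree y ≤ Kᶜ.degree x' + Kᶜ.degree y'

lemma exists_isExtremalSlack (hF : IsMaximumFMatching K f F) (h : HasSlack f F x y) :
    ∃ F' x' y', IsExtremalSlack K f F' x' y' := by
  obtain ⟨⟨F', x', y'⟩, ⟨hF', h'⟩, hmin⟩ := Set.exists_min_image
    {p : SimpleGraph V × V × V | IsMaximumFMatching K f p.1 ∧ HasSlack f p.1 p.2.1 p.2.2}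
    (fun p ↦ Kᶜ.degree p.2.1 + Kᶜ.degree p.2.2) (Set.toFinite _) ⟨(F, x, y), hF, h⟩
  exact ⟨F', x', y', hF', h', fun hF'' h'' ↦ hmin (_, _, _) ⟨hF'', h''⟩⟩

namespace IsExtremalSlack

lemma symm (h : IsExtremalSlack K f F x y) : IsExtremalSlack K f F y x where
  toIsMaximumFMatching := h.toIsMaximumFMatching
  hasSlack := h.hasSlack.symm
  degree_compl_add_le hF' h' := by
    rw [add_comm]
    exact h.degree_compl_add_le hF' h'

lemma degree_compl_le_of_mem_exchange (h : IsExtremalSlack K f F x y) (hs : s ∈ exchange K F x) :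
    Kᶜ.degree x ≤ Kᶜ.degree s := by
  obtain ⟨r, hxr, hrs⟩ := mem_exchange.1 hs
  have hle := h.degree_compl_add_le (h.reroute h.hasSlack hxr hrs) (h.hasSlack.reroute hxr hrs)
  omega

end IsExtremalSlack

end FMatching

section LargeCodegree

variable {V : Type*} [Fintype V] (H : SimpleGraph V) [DecidableRel H.Adj] {T : Finset V}
  {a d : ℕ} {u v : V}

lemma card_add_le_of_le_degree (hd : 4 ≤ d) (hT : ∀ z ∈ T, d ≤ H.degree z) (hcard : 2 ≤ #T)
    (hn : 2 * a + 6 ≤ Fintype.card V) (hsum : ∑ z, H.degree z + a ≤ 2 * Fintype.card V) :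
    #T + a + d ≤ Fintype.card V := by
  by_contra! hlt
  have htwo := two_mul_mul_le_sum_degree H hT hcard
  obtain h | h := Nat.lt_or_ge #T 3
  · omega
  have hthree := two_mul_mul_le_sum_degree H hT h
  obtain h' | h' := Nat.lt_or_ge #T 4
  · omega
  obtain ⟨p, rfl⟩ := Nat.exists_eq_add_of_le hd
  obtain ⟨q, hq⟩ := Nat.exists_eq_add_of_le h'
  have hall : #T * (4 + p) ≤ ∑ z, H.degree z :=
    (card_nsmul_le_sum T _ _ hT).trans (sum_le_univ_sum_of_nonneg fun _ ↦ Nat.zero_le _)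
  rw [hq] at hall hlt
  nlinarith

lemma card_add_le_of_le_degree_of_notMem (hd : 4 ≤ d) (hT : ∀ z ∈ T, d ≤ H.degree z)
    (hcard : 2 ≤ #T) (huv : H.Adj u v) (hu : u ∉ T) (hv : v ∉ T) (hn : 10 ≤ Fintype.card V)
    (hsum : ∑ z, H.degree z + 2 ≤ 2 * Fintype.card V) : #T + 3 + d ≤ Fintype.card V := by
  by_contra! hlt
  have htwo := two_mul_mul_le_sum_degree H hT hcard
  obtain h | h := Nat.lt_or_ge #T 3
  · omega
  have hthree := two_mul_mul_le_sum_degree H hT h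
  obtain h' | h' := Nat.lt_or_ge #T 4
  · omega
  have hfour := two_mul_mul_le_sum_degree H hT h'
  obtain h'' | h'' := Nat.lt_or_ge #T 5
  · omega
  obtain ⟨p, rfl⟩ := Nat.exists_eq_add_of_le hd
  obtain ⟨q, hq⟩ := Nat.exists_eq_add_of_le h''
  have hall : #T * (4 + p) + 2 ≤ ∑ z, H.degree z := by
    have hsub := sum_le_univ_sum_of_nonneg (s := insert u (insert v T)) fun z ↦
      Nat.zero_le (H.degree z)
    rw [sum_insert (by simp [huv.ne, hu]), sum_insert hv] at hsub
    have hTsum := card_nsmul_le_sum T _ _ hT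
    have hupos := huv.degree_pos_left
    have hvpos := huv.degree_pos_right
    rw [smul_eq_mul] at hTsum
    omega
  rw [hq] at hall hlt
  nlinarith

end LargeCodegree

lemma sum_add_ite_mem_add_ite_mem {ι : Type*} {f : ι → ℕ} {a : ℕ} {u v : ι}
    (hf : ∀ z, f z + (if z = u then 1 else 0) + (if z = v then 1 else 0) = a) (A : Finset ι) :
    ∑ z ∈ A, f z + (if u ∈ A then 1 else 0) + (if v ∈ A then 1 else 0) = a * #A := by
  have hsum := sum_congr rfl fun z (_ : z ∈ A) ↦ hf z
  simpa only [sum_add_distrib, sum_ite_eq', sum_const, smul_eq_mul, mul_comm] using hsum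

section Prescribed

variable {V : Type*} [Fintype V] {K F : SimpleGraph V} {f : V → ℕ} {a : ℕ} {u v x y : V}

lemma degree_compl_add_degree_add_one (K : SimpleGraph V) (z : V) :
    Kᶜ.degree z + K.degree z + 1 = Fintype.card V := by
  have hlt := K.degree_lt_card_verts z
  rw [degree_compl]
  omega

namespace IsMaximumFMatching

lemma mul_card_add_le (hF : IsMaximumFMatching K f F)
    (hf : ∀ z, f z + (if z = u then 1 else 0) + (if z = v then 1 else 0) = a)
    (h : HasSlack f F x y) :
    a * #((K \ F).neighborFinset x) + (if y ∈ exchange K F x then 1 else 0) +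
        (if u ∈ exchange K F x then 1 else 0) + (if v ∈ exchange K F x then 1 else 0) ≤
      a * #(exchange K F x) + (if u ∈ (K \ F).neighborFinset x then 1 else 0) +
        (if v ∈ (K \ F).neighborFinset x then 1 else 0) := by
  have hsum := hF.sum_add_ite_le_sum_exchange h
  have hR := sum_add_ite_mem_add_ite_mem hf ((K \ F).neighborFinset x)
  have hS := sum_add_ite_mem_add_ite_mem hf (exchange K F x)
  omega

lemma card_add_ite_le (hF : IsMaximumFMatching K f F)
    (hf : ∀ z, f z + (if z = u then 1 else 0) + (if z = v then 1 else 0) = a) (ha : 2 ≤ a)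
    (h : HasSlack f F x y) :
    #((K \ F).neighborFinset x) + (if y ∈ exchange K F x then 1 else 0) ≤
      #(exchange K F x) + 1 := by
  have hcount := hF.mul_card_add_le hf h
  have hweak : a * #((K \ F).neighborFinset x) + (if y ∈ exchange K F x then 1 else 0) ≤
      a * #(exchange K F x) + 2 := by
    split_ifs at hcount ⊢ <;> omega
  by_contra! hlt
  have hmul := Nat.mul_le_mul_left a hlt
  split_ifs at hweak hmul <;> nlinarith

lemma card_neighborFinset_sdiff_lt (hF : IsMaximumFMatching K f F)
    (hf : ∀ z, f z + (if z = u then 1 else 0) + (if z = v then 1 else 0) = a) (ha : 2 ≤ a)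
    (h : HasSlack f F x y) : #((K \ F).neighborFinset x) < a + Kᶜ.degree y := by
  have hcount := hF.card_add_ite_le hf ha h
  have herase := hF.card_exchange_erase_add_two_le h
  have hy := hf y
  rw [card_erase_eq_ite] at herase
  grind

lemma card_le_card_neighborFinset_sdiff_add (hF : IsMaximumFMatching K f F)
    (hf : ∀ z, f z + (if z = u then 1 else 0) + (if z = v then 1 else 0) = a)
    (h : HasSlack f F x y) :
    Fintype.card V ≤ #((K \ F).neighborFinset x) + a + Kᶜ.degree x := by
  have hdeg := degree_sdiff_add_degree hF.le x
  have hcompl := degree_compl_add_degree_add_one K x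
  have hx := h.degree_lt
  have hfx := hf x
  rw [card_neighborFinset_eq_degree]
  omega

end IsMaximumFMatching

namespace IsExtremalSlack

lemma degree_compl_le_of_mem_insert_exchange (h : IsExtremalSlack K f F x y) :
    ∀ s ∈ insert x (exchange K F x), Kᶜ.degree x ≤ Kᶜ.degree s :=
  forall_mem_insert _ _ _ |>.2 ⟨le_rfl, fun _ ↦ h.degree_compl_le_of_mem_exchange⟩

lemma card_exchange_lt (h : IsExtremalSlack K f F x y)
    (hf : ∀ z, f z + (if z = u then 1 else 0) + (if z = v then 1 else 0) = a)
    (hfK : ∀ z, f z ≤ K.degree z) (hn : 2 * a + 6 ≤ Fintype.card V)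
    (hsum : ∑ z, Kᶜ.degree z + a ≤ 2 * Fintype.card V) (hx : 4 ≤ Kᶜ.degree x) :
    #(exchange K F x) < #((K \ F).neighborFinset x) := by
  by_contra! hle
  have hlow := h.card_le_card_neighborFinset_sdiff_add hf h.hasSlack
  have hpos : 0 < #((K \ F).neighborFinset x) := by
    have hdeg := degree_sdiff_add_degree h.le x
    have hlt := h.hasSlack.degree_lt
    have hfx := hfK x
    rw [card_neighborFinset_eq_degree]
    omega
  have hcard := card_insert_of_notMem (self_notMem_exchange (K := K) (F := F) (x := x))
  have hup := card_add_le_of_le_degree Kᶜ hx h.degree_compl_le_of_mem_insert_exchange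
    (by omega) hn hsum
  omega

lemma card_neighborFinset_sdiff_le (h : IsExtremalSlack K f F x y)
    (hf : ∀ z, f z + (if z = u then 1 else 0) + (if z = v then 1 else 0) = a) (ha : 2 ≤ a)
    (huv : Kᶜ.Adj u v) (hn : 2 * a + 6 ≤ Fintype.card V)
    (hsum : ∑ z, Kᶜ.degree z + a ≤ 2 * Fintype.card V) (hx : 4 ≤ Kᶜ.degree x) :
    #((K \ F).neighborFinset x) ≤ #(exchange K F x) := by
  by_contra! hlt
  have hle := h.card_add_ite_le hf ha h.hasSlack
  have hcount := h.mul_card_add_le hf h.hasSlack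
  have hRS : #((K \ F).neighborFinset x) = #(exchange K F x) + 1 := by omega
  rw [hRS, mul_add_one] at hcount
  obtain ⟨rfl, huR, hvR, huS, hvS⟩ : a = 2 ∧ u ∈ (K \ F).neighborFinset x ∧
      v ∈ (K \ F).neighborFinset x ∧ u ∉ exchange K F x ∧ v ∉ exchange K F x := by
    grind
  have htwo : 2 ≤ #((K \ F).neighborFinset x) := by
    rw [← card_pair huv.ne]
    exact card_le_card (insert_subset huR (singleton_subset_iff.2 hvR))
  have hlow := h.card_le_card_neighborFinset_sdiff_add hf h.hasSlack
  have hcard := card_insert_of_notMem (self_notMem_exchange (K := K) (F := F) (x := x))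
  rw [mem_neighborFinset] at huR hvR
  have hup := card_add_le_of_le_degree_of_notMem Kᶜ hx h.degree_compl_le_of_mem_insert_exchange
    (by omega) huv (by simp only [mem_insert, huR.ne', huS, or_self, not_false_iff])
    (by simp only [mem_insert, hvR.ne', hvS, or_self, not_false_iff]) hn hsum
  omega

end IsExtremalSlack

lemma IsMaximumFMatching.not_hasSlack (hF : IsMaximumFMatching K f F)
    (hf : ∀ z, f z + (if z = u then 1 else 0) + (if z = v then 1 else 0) = a) (ha : 2 ≤ a)
    (hfK : ∀ z, f z ≤ K.degree z) (huv : Kᶜ.Adj u v) (hn : 2 * a + 6 ≤ Fintype.card V)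
    (hsum : ∑ z, Kᶜ.degree z + a ≤ 2 * Fintype.card V) (x y : V) : ¬HasSlack f F x y := by
  intro hslack
  obtain ⟨F', x', y', h⟩ := exists_isExtremalSlack hF hslack
  obtain ⟨p, q, h, hle⟩ : ∃ p q, IsExtremalSlack K f F' p q ∧ Kᶜ.degree q ≤ Kᶜ.degree p := by
    rcases le_total (Kᶜ.degree y') (Kᶜ.degree x') with hle | hle
    exacts [⟨x', y', h, hle⟩, ⟨y', x', h.symm, hle⟩]
  have hp : 4 ≤ Kᶜ.degree p := by
    have hlt := h.card_neighborFinset_sdiff_lt hf ha h.hasSlack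
    have hlow := h.card_le_card_neighborFinset_sdiff_add hf h.hasSlack
    omega
  exact (h.card_exchange_lt hf hfK hn hsum hp).not_ge
    (h.card_neighborFinset_sdiff_le hf ha huv hn hsum hp)

end Prescribed

section Completion

variable {V : Type*} [Fintype V] {K F : SimpleGraph V} {f : V → ℕ} {a : ℕ} {u v x y z : V}

lemma forall_eq_or_exists_add_ite_le {ι : Type*} {f g : ι → ℕ} (h : ∀ i, g i ≤ f i) :
    (∀ i, g i = f i) ∨ ∃ j, ∀ i, g i + (if i = j then 1 else 0) ≤ f i := by
  by_cases heq : ∀ i, g i = f i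
  · exact Or.inl heq
  · obtain ⟨j, hj⟩ := not_forall.1 heq
    refine Or.inr ⟨j, fun i ↦ ?_⟩
    have hi := h i
    grind

lemma exists_le_degree_le_add_one_of_add_ite (hF : F ≤ K) (hfK : ∀ z, f z ≤ K.degree z)
    (hdef : ∀ z, F.degree z + (if z = x then 1 else 0) = f z) :
    ∃ F' ≤ K, ∀ z, f z ≤ F'.degree z ∧ F'.degree z ≤ f z + 1 := by
  have hxK : F.degree x < K.degree x := by
    have hlt := hdef x
    have hle := hfK x
    rw [if_pos rfl] at hlt
    omega
  have hsdiff := degree_sdiff_add_degree hF x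
  obtain ⟨r, hr⟩ := ((K \ F).degree_pos_iff_exists_adj x).1 (by omega)
  refine ⟨F ⊔ edge x r, sup_le hF (by simp [hr.1]), fun z ↦ ?_⟩
  rw [degree_sup_edge hr.ne hr.2, hdef]
  split_ifs <;> omega

lemma not_even_card_mul (hdeg : ∀ z, F.degree z + (if z = x then 1 else 0) +
    (if z = u then 1 else 0) + (if z = v then 1 else 0) = a) : ¬Even (Fintype.card V * a) := by
  have hsum := sum_congr rfl fun z (_ : z ∈ univ) ↦ hdeg z
  simp only [sum_add_distrib, sum_ite_eq', mem_univ, if_true, sum_const, smul_eq_mul,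
    F.sum_degrees_eq_twice_card_edges, card_univ] at hsum
  rw [← hsum]
  grind

lemma exists_le_degree_le_add_one_of_two_le
    (hf : ∀ z, f z + (if z = u then 1 else 0) + (if z = v then 1 else 0) = a) (ha : 2 ≤ a)
    (hfK : ∀ z, f z ≤ K.degree z) (huv : Kᶜ.Adj u v) (hn : 2 * a + 6 ≤ Fintype.card V)
    (hsum : ∑ z, Kᶜ.degree z + a ≤ 2 * Fintype.card V) :
    ∃ F ≤ K, (∀ z, f z ≤ F.degree z ∧ F.degree z ≤ f z + 1) ∧
      (Even (Fintype.card V * a) → ∀ z, F.degree z = f z) := by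
  obtain ⟨F, hF⟩ := exists_isMaximumFMatching K f
  obtain heq | ⟨x, hx⟩ := forall_eq_or_exists_add_ite_le hF.degree_le
  · exact ⟨F, hF.le, fun z ↦ by simp [heq], fun _ ↦ heq⟩
  obtain (heq : ∀ z, F.degree z + (if z = x then 1 else 0) = f z) | ⟨y, hy⟩ :=
    forall_eq_or_exists_add_ite_le hx
  · obtain ⟨F', hF', hdeg⟩ := exists_le_degree_le_add_one_of_add_ite hF.le hfK heq
    exact ⟨F', hF', hdeg, fun heven ↦ (not_even_card_mul (F := F) (x := x)
      (fun z ↦ by rw [heq, hf]) heven).elim⟩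
  · exact (hF.not_hasSlack hf ha hfK huv hn hsum x y hy).elim

lemma not_adj_of_degree_lt_of_le_one (hx : F.degree x < f x) (hf : f x ≤ 1) (y : V) :
    ¬F.Adj x y := fun hxy ↦ by
  have hpos := hxy.degree_pos_left
  omega

lemma HasSlack.ne_of_le_one (h : HasSlack f F x y) (hf : f x ≤ 1) : x ≠ y := by
  rintro rfl
  have hx := h x
  grind

lemma HasSlack.of_ne (hdeg : ∀ z, F.degree z ≤ f z) (hxy : x ≠ y) (hx : F.degree x < f x)
    (hy : F.degree y < f y) : HasSlack f F x y := fun z ↦ by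
  have hz := hdeg z
  grind

namespace IsMaximumFMatching

lemma card_exchange_add_two_le (hF : IsMaximumFMatching K f F) (hf : ∀ z, f z ≤ 1)
    (hxy : x ≠ y) (hxz : x ≠ z) (hyz : y ≠ z) (hx : F.degree x < f x) (hy : F.degree y < f y)
    (hz : F.degree z < f z) : #(exchange K F x) + 2 ≤ Kᶜ.degree y := by
  have hzero {p : V} (hp : F.degree p < f p) (q : V) : ¬F.Adj p q :=
    not_adj_of_degree_lt_of_le_one hp (hf p) q
  have hcompl {p : V} (hp : F.degree p < f p) (hyp : y ≠ p) : Kᶜ.Adj y p :=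
    ⟨hyp, fun hadj ↦ hF.not_adj (.of_ne hF.degree_le hyp hy hp) ⟨hadj, hzero hy p⟩⟩
  have hsub : exchange K F x ⊆ ((Kᶜ.neighborFinset y).erase x).erase z := fun s hs ↦ by
    obtain ⟨r, -, hrs⟩ := mem_exchange.1 hs
    have hne {p : V} (hp : F.degree p < f p) : s ≠ p := fun hsp ↦ hzero hp r (hsp ▸ hrs.symm)
    simp only [mem_erase, mem_neighborFinset]
    exact ⟨hne hz, hne hx, (hne hy).symm, fun hys ↦
      hzero hy s (hF.adj_of_mem_exchange (.of_ne hF.degree_le hxy hx hy) hs hys.symm).symm⟩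
  have hcard := card_le_card hsub
  have hxmem : x ∈ Kᶜ.neighborFinset y := (mem_neighborFinset ..).2 (hcompl hx hxy.symm)
  have hzmem : z ∈ (Kᶜ.neighborFinset y).erase x :=
    mem_erase.2 ⟨hxz.symm, (mem_neighborFinset ..).2 (hcompl hz hyz)⟩
  have herase := card_erase_add_one hxmem
  have herase' := card_erase_add_one hzmem
  rw [card_neighborFinset_eq_degree] at herase
  omega

lemma card_le_degree_compl_add (hF : IsMaximumFMatching K f F)
    (hf : ∀ z, f z + (if z = u then 1 else 0) + (if z = v then 1 else 0) = 1)
    (hxy : x ≠ y) (hxz : x ≠ z) (hyz : y ≠ z) (hx : F.degree x < f x) (hy : F.degree y < f y)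
    (hz : F.degree z < f z) : Fintype.card V ≤ Kᶜ.degree x + Kᶜ.degree y + 1 := by
  have hS := hF.card_exchange_add_two_le (fun w ↦ by have := hf w; omega) hxy hxz hyz hx hy hz
  have hcount := hF.mul_card_add_le hf (.of_ne hF.degree_le hxy hx hy)
  have hdeg := degree_sdiff_add_degree hF.le x
  have hcompl := degree_compl_add_degree_add_one K x
  have hfx := hf x
  rw [card_neighborFinset_eq_degree] at hcount
  split_ifs at hcount <;> omega

lemma eq_or_eq_or_eq_of_degree_lt {H : SimpleGraph V} [DecidableRel H.Adj]
    (hF : IsMaximumFMatching K f F)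
    (hf : ∀ z, f z + (if z = u then 1 else 0) + (if z = v then 1 else 0) = 1)
    (hH : ∀ z, Kᶜ.degree z = H.degree z + (if z = u then 1 else 0) + (if z = v then 1 else 0))
    (hn : 6 ≤ Fintype.card V) (hsum : ∑ z, H.degree z + 4 ≤ 2 * Fintype.card V)
    (hx : F.degree x < f x) (hy : F.degree y < f y) (hz : F.degree z < f z) :
    x = y ∨ x = z ∨ y = z := by
  by_contra! hne
  obtain ⟨hxy, hxz, hyz⟩ := hne
  have hle := hF.card_le_degree_compl_add hf hxy hxz hyz hx hy hz
  have hle' := hF.card_le_degree_compl_add hf hyz hxy.symm hxz.symm hy hz hx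
  have hle'' := hF.card_le_degree_compl_add hf hxz hxy hyz.symm hx hz hy
  have hdeg {p : V} (hp : F.degree p < f p) : Kᶜ.degree p = H.degree p := by
    have hfp := hf p
    have hHp := hH p
    omega
  rw [hdeg hx, hdeg hy] at hle
  rw [hdeg hy, hdeg hz] at hle'
  rw [hdeg hx, hdeg hz] at hle''
  have htwo := two_mul_sum_degree_le H {x, y, z}
  rw [card_eq_three.2 ⟨x, y, z, hxy, hxz, hyz, rfl⟩, sum_insert (by simp [hxy, hxz]),
    sum_pair hyz] at htwo
  omega

end IsMaximumFMatching

lemma exists_adj_adj_ne (hx : 0 < K.degree x) (hy : 0 < K.degree y)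
    (hxy : 3 ≤ K.degree x + K.degree y) : ∃ r s, K.Adj x r ∧ K.Adj y s ∧ r ≠ s := by
  simp only [← card_neighborFinset_eq_degree] at hxy
  obtain h | h : 1 < #(K.neighborFinset x) ∨ 1 < #(K.neighborFinset y) := by omega
  · obtain ⟨s, hs⟩ := (K.degree_pos_iff_exists_adj y).1 hy
    obtain ⟨r, hr, hrs⟩ := exists_mem_ne h s
    exact ⟨r, s, (mem_neighborFinset ..).1 hr, hs, hrs⟩
  · obtain ⟨r, hr⟩ := (K.degree_pos_iff_exists_adj x).1 hx
    obtain ⟨s, hs, hsr⟩ := exists_mem_ne h r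
    exact ⟨r, s, hr, (mem_neighborFinset ..).1 hs, hsr.symm⟩

lemma three_le_degree_add_degree (hxy : x ≠ y) (hn : 5 ≤ Fintype.card V)
    (hsum : ∑ z, Kᶜ.degree z + 2 ≤ 2 * Fintype.card V) : 3 ≤ K.degree x + K.degree y := by
  have htwo := two_mul_sum_degree_le Kᶜ {x, y}
  rw [sum_pair hxy, card_pair hxy] at htwo
  have hx := degree_compl_add_degree_add_one K x
  have hy := degree_compl_add_degree_add_one K y
  omega

lemma exists_le_degree_le_add_one_of_add_ite_add_ite (hF : IsMaximumFMatching K f F)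
    (hf : ∀ z, f z ≤ 1) (hfK : ∀ z, f z ≤ K.degree z)
    (hdef : ∀ z, F.degree z + (if z = x then 1 else 0) + (if z = y then 1 else 0) = f z)
    (hK : 3 ≤ K.degree x + K.degree y) :
    ∃ F' ≤ K, ∀ z, f z ≤ F'.degree z ∧ F'.degree z ≤ f z + 1 := by
  have hslack : HasSlack f F x y := fun z ↦ (hdef z).le
  have hxy := hslack.ne_of_le_one (hf x)
  have hFx := not_adj_of_degree_lt_of_le_one hslack.degree_lt (hf x)
  have hFy := not_adj_of_degree_lt_of_le_one hslack.symm.degree_lt (hf y)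
  obtain ⟨r, s, hxr, hys, hrs⟩ := exists_adj_adj_ne (hslack.degree_lt.trans_le (hfK x)).pos
    (hslack.symm.degree_lt.trans_le (hfK y)).pos hK
  have hry : r ≠ y := fun h ↦ hF.not_adj hslack (h ▸ ⟨hxr, hFx r⟩)
  have hFys : ¬(F ⊔ edge x r).Adj y s := by
    simp only [sup_adj, edge_adj, not_or]
    exact ⟨hFy s, by tauto⟩
  refine ⟨F ⊔ edge x r ⊔ edge y s, sup_le (sup_le hF.le (by simp [hxr])) (by simp [hys]),
    fun z ↦ ?_⟩
  rw [degree_sup_edge hys.ne hFys, degree_sup_edge hxr.ne (hFx r), ← hdef]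
  grind

lemma exists_le_degree_le_add_one_of_one {H : SimpleGraph V} [DecidableRel H.Adj]
    (hf : ∀ z, f z + (if z = u then 1 else 0) + (if z = v then 1 else 0) = 1)
    (hH : ∀ z, Kᶜ.degree z = H.degree z + (if z = u then 1 else 0) + (if z = v then 1 else 0))
    (hfK : ∀ z, f z ≤ K.degree z) (hn : 6 ≤ Fintype.card V)
    (hsum : ∑ z, H.degree z + 4 ≤ 2 * Fintype.card V) :
    ∃ F ≤ K, ∀ z, f z ≤ F.degree z ∧ F.degree z ≤ f z + 1 := by
  have hf1 (z : V) : f z ≤ 1 := by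
    have hz := hf z
    omega
  have hsumK : ∑ z, Kᶜ.degree z + 2 ≤ 2 * Fintype.card V := by
    simp only [hH, sum_add_distrib, sum_ite_eq', mem_univ, if_true]
    omega
  obtain ⟨F, hF⟩ := exists_isMaximumFMatching K f
  obtain heq | ⟨x, hx⟩ := forall_eq_or_exists_add_ite_le hF.degree_le
  · exact ⟨F, hF.le, fun z ↦ by simp [heq]⟩
  obtain heq | ⟨y, hxy : HasSlack f F x y⟩ := forall_eq_or_exists_add_ite_le hx
  · exact exists_le_degree_le_add_one_of_add_ite hF.le hfK heq
  obtain heq | ⟨z, hz⟩ := forall_eq_or_exists_add_ite_le hxy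
  · exact exists_le_degree_le_add_one_of_add_ite_add_ite hF hf1 hfK heq
      (three_le_degree_add_degree (hxy.ne_of_le_one (hf1 x)) (by omega) hsumK)
  · have hxz : HasSlack f F x z := fun w ↦ by have hw := hz w; omega
    have hyz : HasSlack f F y z := fun w ↦ by have hw := hz w; omega
    have hne := hF.eq_or_eq_or_eq_of_degree_lt hf hH hn hsum hxy.degree_lt hyz.degree_lt
      hxz.symm.degree_lt
    have := hxy.ne_of_le_one (hf1 x)
    have := hxz.ne_of_le_one (hf1 x)
    have := hyz.ne_of_le_one (hf1 y)
    tauto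

lemma exists_le_degree_add_le {b : ℕ} {H : SimpleGraph V} [DecidableRel H.Adj] (ha : 1 ≤ a)
    (hab : a ≤ b) (hb : 2 ≤ b) (hn : min (3 * a + 4) (2 * a + 6) ≤ Fintype.card V)
    (hpar : a = b → Even (Fintype.card V * a)) (huv : Kᶜ.Adj u v)
    (hf : ∀ z, f z + (if z = u then 1 else 0) + (if z = v then 1 else 0) = a)
    (hfK : ∀ z, f z ≤ K.degree z)
    (hH : ∀ z, Kᶜ.degree z = H.degree z + (if z = u then 1 else 0) + (if z = v then 1 else 0))
    (hcard : #H.edgeFinset + (a + 1) / 2 + 1 ≤ Fintype.card V) :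
    ∃ F ≤ K, ∀ z, f z ≤ F.degree z ∧ F.degree z + a ≤ f z + b := by
  have hsum := H.sum_degrees_eq_twice_card_edges
  obtain rfl | ha' := ha.eq_or_lt
  · obtain ⟨F, hF, hdeg⟩ := exists_le_degree_le_add_one_of_one hf hH hfK (by omega) (by omega)
    exact ⟨F, hF, fun z ↦ by have hz := hdeg z; omega⟩
  have hsumK : ∑ z, Kᶜ.degree z + a ≤ 2 * Fintype.card V := by
    simp only [hH, sum_add_distrib, sum_ite_eq', mem_univ, if_true]
    omega
  obtain ⟨F, hF, hdeg, heven⟩ :=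
    exists_le_degree_le_add_one_of_two_le hf ha' hfK huv (by omega) hsumK
  refine ⟨F, hF, fun z ↦ ?_⟩
  obtain hab' | hab' := hab.eq_or_lt
  · simp [heven (hpar hab') z, hab'.le]
  · have hz := hdeg z
    omega

end Completion

section Covered

variable {V : Type*} [Fintype V] {G F : SimpleGraph V} {f : V → ℕ} {a b : ℕ} {u v : V}

lemma ncard_neighborSet_eq_degree (F : SimpleGraph V) (z : V) :
    (F.neighborSet z).ncard = F.degree z := by
  rw [Set.ncard_eq_toFinset_card', Set.toFinset_card, card_neighborSet_eq_degree]

lemma hasABFactorThrough_of_le_sdiff_edge (huv : G.Adj u v) (hF : F ≤ G \ edge u v)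
    (hf : ∀ z, f z + (if z = u then 1 else 0) + (if z = v then 1 else 0) = a)
    (hdeg : ∀ z, f z ≤ F.degree z ∧ F.degree z + a ≤ f z + b) : HasABFactorThrough G a b u v := by
  have hnot : ¬F.Adj u v := fun h ↦ (hF h).2 (by simp [edge_adj, huv.ne])
  refine ⟨F ⊔ edge u v, sup_le (hF.trans sdiff_le) (by simp [huv]),
    Or.inr (by simp [edge_adj, huv.ne]), fun z ↦ ?_⟩
  have hz := hf z
  have hz' := hdeg z
  rw [ncard_neighborSet_eq_degree, degree_sup_edge huv.ne hnot]
  omega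

end Covered

theorem abCovered_of_complement_small_general {V : Type*} [Fintype V] {a b : ℕ} (ha : 1 ≤ a)
    (hab : a ≤ b) (hb : 2 ≤ b) (hn : min (3 * a + 4) (2 * a + 6) ≤ Fintype.card V)
    (G : SimpleGraph V) [DecidableRel G.Adj] (hδ : a ≤ G.minDegree)
    (hpar : a = b → Even (Fintype.card V * a))
    (hcomp : #Gᶜ.edgeFinset + (a + 1) / 2 + 1 ≤ Fintype.card V) : IsABCovered G a b := by
  intro u v huv
  obtain ⟨f, hf⟩ : ∃ f : V → ℕ,
      ∀ z, f z + (if z = u then 1 else 0) + (if z = v then 1 else 0) = a :=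
    ⟨fun z ↦ a - (if z = u then 1 else 0) - (if z = v then 1 else 0), fun z ↦ by grind [huv.ne]⟩
  obtain ⟨K, hK⟩ : ∃ K, K = G \ edge u v := ⟨_, rfl⟩
  have hfK (z : V) : f z ≤ K.degree z := by
    have hz := hδ.trans (G.minDegree_le_degree z)
    have hKz : K.degree z + (if z = u then 1 else 0) + (if z = v then 1 else 0) = G.degree z := by
      subst hK
      rw [degree_sdiff_edge huv]
    have hfz := hf z
    omega
  have huvK : Kᶜ.Adj u v := by
    simp [hK, compl_adj, edge_adj, huv.ne]
  obtain ⟨F, hF, hdeg⟩ := exists_le_degree_add_le ha hab hb hn hpar huvK hf hfK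
    (fun z ↦ by subst hK; rw [degree_compl_sdiff_edge huv]) hcomp
  exact hasABFactorThrough_of_le_sdiff_edge huv (hK ▸ hF) hf hdeg

/-- If 1 ≤ a ≤ b, b ≥ 2, δ(G) ≥ a, n ≥ 3a+4, na even when a = b, and
e(Ḡ) ≤ n - ⌈a/2⌉ - 1, then G is [a,b]-covered. -/
theorem abCovered_of_complement_small {n a b : ℕ} (ha : 1 ≤ a) (hab : a ≤ b)
    (hb : 2 ≤ b) (hn : 3 * a + 4 ≤ n) (G : SimpleGraph (Fin n)) [DecidableRel G.Adj]
    (hδ : a ≤ G.minDegree) (hpar : a = b → Even (n * a))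
    (hcomp : Gᶜ.edgeFinset.card + (a + 1) / 2 + 1 ≤ n) :
    IsABCovered G a b := by
  refine abCovered_of_complement_small_general ha hab hb ?_ G hδ (by simpa) ?_
  · exact (min_le_left _ _).trans (hn.trans_eq (Fintype.card_fin n).symm)
  · convert hcomp
    exact Fintype.card_fin n
end
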